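/- Assume the Felli–Schneider condition Λ = 4(d−1)/(q²−4). Let (u_n) ⊂ H¹(𝒞) satisfy ‖u_n‖_q² → 1, ‖u_n‖² → C_*, and F(u_n)/dist(u_n,ℳ)² → 0, and let u_n(s,ω) = λ_n (u + μ_n (u^{q/2} ω_d + R_n))(s − t_n, D_n ω) be the decomposition from the projection on non-trivial zero modes (with μ_n → 0, ‖R_n‖ → 0, and R_n orthogonal in H¹(𝒞) to u, ∂_s u and u^{q/2}ω_i, i=1,…,d). Then there is an n-independent constant C < ∞ such that λ_n^{−2} F(u_n) ≥ (A) + (B) + O(|μ_n|⁵) as n → ∞, where (A) := μ_n² ((1 − C|μ_n|^{min(q−2,1)})‖R_n‖² − (q−1)∫_𝒞 (u^{q−2}R_n² + (q−2)μ_n u^{2q−3} ω_d² R_n) d(s,ω)) and (B) := μ_n⁴ ((q−1)(q−2)/4) ((q−1)/‖u‖_q^q · (∫_𝒞 u^{2q−2} ω_d² d(s,ω))² − ((q−3)/3) ∫_𝒞 u^{3q−4} ω_d⁴ d(s,ω)). -/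

import Mathlib

/-!
# Quartic expansion of the deficit at the Felli–Schneider threshold

Write `v = u + μ (w + R)` with the zero mode `w = u^{q/2} ω_d`, and put `N = ∫ u^q`,
`P = ∫ u^{2q-2} ω_d²`, `Q = ∫ u^{3q-4} ω_d⁴`, `S = ∫ u^{2q-3} ω_d² R`, `T = ∫ u^{q-2} R²`.

Both norms are invariant under translations and rotations of the cylinder, and the tangential
gradient depends only on the values on the sphere, so that `λ⁻² F(u_n) = ‖v‖² - C_* ‖v‖_q²`
(`deficit_transport`).

The energy is exact: `‖v‖² = N + μ² ((q-1) P + ‖R‖²)` (`h1NormSq_V`). It follows from the weak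
equations `⟨u, φ⟩ = ∫ u^{q-1} φ` and `⟨w, φ⟩ = (q-1) ∫ u^{q-2} w φ` (`inner_U`, `inner_W`; the
second one is where the Felli–Schneider condition enters), the orthogonality relations for `R`
and the oddness of `ω_d`. The weak equations are integrations by parts on the line and on the
sphere; the latter uses that the surface measure is invariant under rotations (`sph_ibp`).

For `‖v‖_q^q`, a fourth-order Taylor expansion in `μ w / u` combined with a second-order one in
`R` gives a pointwise upper bound of `|v|^q` with error `O(|μ|⁵ u^q + |μ|^{min(q,3)} (|R|^q + R²))`
(`pointwise_expansion`). On integration the odd powers of `ω_d` and the terms linear in `R`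
killed by orthogonality disappear, leaving an expansion in `N, P, Q, S, T` (`integral_V_le`).
Taking the power `2/q` (`norm_expansion`) and using `C_* ≤ N^{1-2/q}`, obtained by testing with
`u` (`Cstar_le`), produces the terms (A) and (B).

The error term `∫ |R|^q` is bounded by a multiple of `‖R‖²` as soon as some positive constant is
admissible in the inequality defining `C_*`, hence when `C_* > 0` (`expansion_pos`). If
`C_* ≤ 0`, the deficit is at least `N > 0` whereas (A) + (B) tends to zero, and
the claim is trivial (`expansion_nonpos`).
-/

open MeasureTheory Real Filter Topology Set
open scoped RealInnerProductSpace

noncomputable section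

/-- Euclidean space ℝ^d. -/
abbrev Ed (d : ℕ) : Type := EuclideanSpace ℝ (Fin d)

/-- The unit sphere 𝕊^{d-1}. -/
abbrev Sph (d : ℕ) := Metric.sphere (0 : Ed d) 1

/-- The surface measure on the unit sphere. -/
def sphMeasure (d : ℕ) : Measure (Sph d) := (volume : Measure (Ed d)).toSphere

/-- The natural measure on the cylinder 𝒞 = ℝ × 𝕊^{d-1}. -/
def cylMeasure (d : ℕ) : Measure (ℝ × Sph d) := (volume : Measure ℝ).prod (sphMeasure d)

/-- The total surface measure |𝕊^{d-1}|. -/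
def sphVol (d : ℕ) : ℝ := (sphMeasure d Set.univ).toReal

/-- The last Cartesian coordinate on ℝ^d. -/
def coordLast (d : ℕ) (x : Ed d) : ℝ :=
  if h : 0 < d then x ⟨d - 1, Nat.sub_lt h one_pos⟩ else 0

/-- Value of a function of the ambient variables at a point of the cylinder. -/
def cylVal (d : ℕ) (φ : ℝ × Ed d → ℝ) (p : ℝ × Sph d) : ℝ := φ (p.1, (p.2 : Ed d))

/-- The partial derivative in the axial direction. -/
def dS (d : ℕ) (φ : ℝ × Ed d → ℝ) (p : ℝ × Sph d) : ℝ :=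
  deriv (fun s => φ (s, (p.2 : Ed d))) p.1

/-- The tangential (spherical) gradient: the spatial gradient minus its radial component. -/
def sgrad (d : ℕ) (φ : ℝ × Ed d → ℝ) (p : ℝ × Sph d) : Ed d :=
  gradient (fun x => φ (p.1, x)) (p.2 : Ed d) -
    ⟪gradient (fun x => φ (p.1, x)) (p.2 : Ed d), (p.2 : Ed d)⟫ • (p.2 : Ed d)

/-- The squared H¹(𝒞)-norm with parameter Λ. -/
def h1NormSq (d : ℕ) (Λ : ℝ) (φ : ℝ × Ed d → ℝ) : ℝ :=
  ∫ p, (dS d φ p ^ 2 + ‖sgrad d φ p‖ ^ 2 + Λ * cylVal d φ p ^ 2) ∂(cylMeasure d)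

/-- The H¹(𝒞)-inner product with parameter Λ. -/
def h1Inner (d : ℕ) (Λ : ℝ) (φ ψ : ℝ × Ed d → ℝ) : ℝ :=
  ∫ p, (dS d φ p * dS d ψ p + ⟪sgrad d φ p, sgrad d ψ p⟫ +
    Λ * cylVal d φ p * cylVal d ψ p) ∂(cylMeasure d)

/-- The L^q(𝒞)-norm. -/
def lqNorm (d : ℕ) (q : ℝ) (φ : ℝ × Ed d → ℝ) : ℝ :=
  (∫ p, |cylVal d φ p| ^ q ∂(cylMeasure d)) ^ (1 / q)

/-- Surrogate for membership in H¹(𝒞): a C¹ function of the ambient variables with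
finite H¹-energy and finite L^q-norm on the cylinder. -/
def MemH1 (d : ℕ) (Λ q : ℝ) (φ : ℝ × Ed d → ℝ) : Prop :=
  ContDiff ℝ 1 φ ∧
  Integrable (fun p => dS d φ p ^ 2 + ‖sgrad d φ p‖ ^ 2 + Λ * cylVal d φ p ^ 2) (cylMeasure d) ∧
  Integrable (fun p => |cylVal d φ p| ^ q) (cylMeasure d)

/-- The optimal constant C_* in the inequality ‖φ‖² ≥ C_* ‖φ‖_q². -/
def Cstar (d : ℕ) (Λ q : ℝ) : ℝ :=
  sSup {c : ℝ | ∀ φ, MemH1 d Λ q φ → c * lqNorm d q φ ^ 2 ≤ h1NormSq d Λ φ}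

/-- α = ((q-2)/2)√Λ. -/
def alphaV (q Λ : ℝ) : ℝ := (q - 2) / 2 * Real.sqrt Λ

/-- β = (qΛ/2)^{1/(q-2)}. -/
def betaV (q Λ : ℝ) : ℝ := (q * Λ / 2) ^ (1 / (q - 2))

/-- The radial optimizer u(s) = β cosh(αs)^{-2/(q-2)}. -/
def Ufun (q Λ : ℝ) (s : ℝ) : ℝ := betaV q Λ * Real.cosh (alphaV q Λ * s) ^ (-(2 / (q - 2)))

/-- u viewed as a function of the ambient cylinder variables. -/
def Ucyl (d : ℕ) (q Λ : ℝ) : ℝ × Ed d → ℝ := fun z => Ufun q Λ z.1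

/-- The H¹-distance to the manifold ℳ = {λ u(· - t)} of optimizers. -/
def distM (d : ℕ) (Λ q : ℝ) (φ : ℝ × Ed d → ℝ) : ℝ :=
  ⨅ lt : ℝ × ℝ, Real.sqrt (h1NormSq d Λ fun z => φ z - lt.1 * Ufun q Λ (z.1 - lt.2))

/-- The deficit functional F. -/
def deficitF (d : ℕ) (Λ q : ℝ) (φ : ℝ × Ed d → ℝ) : ℝ :=
  h1NormSq d Λ φ - Cstar d Λ q * lqNorm d q φ ^ 2

end

noncomputable section

/-- The quadratic-in-R_n term (A) of the quartic expansion, with constant C. -/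
def Aterm (d : ℕ) (q Λ C μn : ℝ) (Rn : ℝ × Ed d → ℝ) : ℝ :=
  μn ^ 2 * ((1 - C * |μn| ^ min (q - 2) 1) * h1NormSq d Λ Rn -
    (q - 1) * ∫ p, (Ufun q Λ p.1 ^ (q - 2) * cylVal d Rn p ^ 2 +
      (q - 2) * μn * Ufun q Λ p.1 ^ (2 * q - 3) * coordLast d (p.2 : Ed d) ^ 2 * cylVal d Rn p)
      ∂(cylMeasure d))

/-- The constant quartic term (B) of the quartic expansion. -/
def Bterm (d : ℕ) (q Λ μn : ℝ) : ℝ :=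
  μn ^ 4 * ((q - 1) * (q - 2) / 4) *
    ((q - 1) / (∫ p, Ufun q Λ p.1 ^ q ∂(cylMeasure d)) *
        (∫ p, Ufun q Λ p.1 ^ (2 * q - 2) * coordLast d (p.2 : Ed d) ^ 2 ∂(cylMeasure d)) ^ 2 -
      (q - 3) / 3 *
        ∫ p, Ufun q Λ p.1 ^ (3 * q - 4) * coordLast d (p.2 : Ed d) ^ 4 ∂(cylMeasure d))

end

/-! ### Pointwise expansion of the power -/

/-- The generalized binomial coefficient `p (p - 1) ⋯ (p - n + 1) / n!`. -/
noncomputable def binCoef : ℝ → ℕ → ℝ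
  | _, 0 => 1
  | p, n + 1 => p / (n + 1) * binCoef (p - 1) n

/-- Binomial Taylor expansion of `(1 + x)^p` with remainder, uniform on `|x| ≤ 1/2`; by
induction on the order, since differentiation lowers both the exponent and the order. -/
lemma binomial_taylor (n : ℕ) : ∀ p : ℝ, ∃ C : ℝ, 0 ≤ C ∧ ∀ x : ℝ, |x| ≤ 1 / 2 →
    |(1 + x) ^ p - ∑ j ∈ Finset.range n, binCoef p j * x ^ j| ≤ C * |x| ^ n := by
  induction n with
  | zero =>
    intro p
    refine ⟨(1 / 2 : ℝ) ^ p + 2 ^ p, by positivity, fun x hx => ?_⟩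
    rw [abs_le] at hx
    have h0 : 0 < 1 + x := by linarith
    simp only [Finset.range_zero, Finset.sum_empty, sub_zero, pow_zero, mul_one]
    rw [abs_of_pos (rpow_pos_of_pos h0 p)]
    have h1 : (0 : ℝ) < (1 / 2) ^ p := by positivity
    have h2 : (0 : ℝ) < 2 ^ p := by positivity
    rcases le_total 0 p with hp | hp
    · have := rpow_le_rpow h0.le (by linarith : 1 + x ≤ 2) hp
      linarith
    · have := rpow_le_rpow_of_nonpos (by norm_num) (by linarith : 1 / 2 ≤ 1 + x) hp
      linarith
  | succ n ih =>
    intro p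
    obtain ⟨C, hC, h⟩ := ih (p - 1)
    refine ⟨|p| * C, by positivity, fun x hx => ?_⟩
    set f : ℝ → ℝ := fun y => (1 + y) ^ p - ∑ j ∈ Finset.range (n + 1), binCoef p j * y ^ j
      with hf
    have hder : ∀ y ∈ Icc (-|x|) |x|, HasDerivWithinAt f
        (p * ((1 + y) ^ (p - 1) - ∑ j ∈ Finset.range n, binCoef (p - 1) j * y ^ j))
        (Icc (-|x|) |x|) y := by
      intro y hy
      have h0 : 0 < 1 + y := by linarith [hy.1]
      have h1 : HasDerivAt (fun y : ℝ => (1 + y) ^ p) (1 * p * (1 + y) ^ (p - 1)) y :=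
        ((hasDerivAt_id y).const_add 1).rpow_const (Or.inl h0.ne')
      have h2 : HasDerivAt (fun y : ℝ => ∑ j ∈ Finset.range (n + 1), binCoef p j * y ^ j)
          (∑ j ∈ Finset.range (n + 1), binCoef p j * (j * y ^ (j - 1))) y :=
        HasDerivAt.fun_sum fun j _ => (hasDerivAt_pow j y).const_mul _
      have h3 := (h1.sub h2).hasDerivWithinAt (s := Icc (-|x|) |x|)
      refine HasDerivWithinAt.congr_deriv h3 (Eq.symm ?_)
      rw [Finset.sum_range_succ', mul_sub, Finset.mul_sum]
      simp only [Nat.cast_zero, zero_mul, mul_zero, add_zero, one_mul]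
      congr 1
      refine Finset.sum_congr rfl fun j _ => ?_
      have : (j : ℝ) + 1 ≠ 0 := by positivity
      simp only [binCoef, Nat.cast_add, Nat.cast_one, Nat.add_sub_cancel]
      field_simp
    have hb : ∀ y ∈ Icc (-|x|) |x|,
        ‖p * ((1 + y) ^ (p - 1) - ∑ j ∈ Finset.range n, binCoef (p - 1) j * y ^ j)‖
          ≤ |p| * C * |x| ^ n := by
      intro y hy
      have hy' : |y| ≤ |x| := abs_le.2 hy
      rw [norm_mul, norm_eq_abs, norm_eq_abs, mul_assoc]
      refine mul_le_mul_of_nonneg_left ((h y (hy'.trans hx)).trans ?_) (abs_nonneg _)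
      gcongr
    have := (convex_Icc (-|x|) |x|).norm_image_sub_le_of_norm_hasDerivWithin_le hder hb
      (x := 0) (y := x) (by simp) (by simp [neg_abs_le, le_abs_self])
    have hf0 : f 0 = 0 := by
      simp only [hf, add_zero, one_rpow, Finset.sum_range_succ']
      simp [binCoef]
    rw [hf0, sub_zero, sub_zero, norm_eq_abs, norm_eq_abs] at this
    rw [pow_succ, ← mul_assoc]
    exact this

/-- Second-order upper expansion of `|1 + x|^q`, valid for every real `x`: the Taylor bound for
`|x| ≤ 1/2`, and the term `|x|^q` for large `|x|`. -/
lemma abs_one_add_rpow_le {q : ℝ} (hq : 2 < q) : ∃ C : ℝ, 0 ≤ C ∧ ∀ x : ℝ,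
    |1 + x| ^ q ≤ 1 + q * x + q * (q - 1) / 2 * x ^ 2 + C * (|x| ^ q + |x| ^ min q 3) := by
  obtain ⟨C, hC, h⟩ := binomial_taylor 3 q
  refine ⟨C + 3 ^ q + q * 2 ^ q, by positivity, fun x => ?_⟩
  have hxq : 0 ≤ |x| ^ q := by positivity
  have hxm : 0 ≤ |x| ^ min q 3 := by positivity
  have h3 : (0 : ℝ) < 3 ^ q := by positivity
  have h2 : (0 : ℝ) < q * 2 ^ q := by positivity
  rcases le_or_gt |x| (1 / 2) with hx | hx
  · have h1 := (abs_le.1 (h x hx)).2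
    have hx' := abs_le.1 hx
    rw [abs_of_pos (by linarith : 0 < 1 + x)]
    simp only [Finset.sum_range_succ, Finset.sum_range_zero, binCoef] at h1
    have h4 : |x| ^ 3 ≤ |x| ^ min q 3 := by
      rcases eq_or_lt_of_le (abs_nonneg x) with h0 | h0
      · rw [← h0, zero_rpow (by have := lt_min (by linarith : 0 < q) (by norm_num : (0:ℝ) < 3); exact this.ne')]
        norm_num
      · rw [← rpow_natCast]
        exact rpow_le_rpow_of_exponent_ge h0 (by linarith) (by push_cast; exact min_le_right _ _)
    have h5 := mul_le_mul_of_nonneg_left h4 hC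
    norm_num at h1
    nlinarith [mul_nonneg h3.le hxq, mul_nonneg h3.le hxm, mul_nonneg h2.le hxq,
      mul_nonneg h2.le hxm, mul_nonneg hC hxq]
  · have h1 : |1 + x| ^ q ≤ 3 ^ q * |x| ^ q := by
      rw [← mul_rpow (by norm_num) (abs_nonneg x)]
      refine rpow_le_rpow (abs_nonneg _) ?_ (by linarith)
      calc |1 + x| ≤ |1| + |x| := abs_add_le _ _
        _ ≤ 3 * |x| := by rw [abs_one]; linarith
    have h4 : |x| ≤ 2 ^ q * |x| ^ q := by
      rw [← mul_rpow (by norm_num) (abs_nonneg x)]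
      calc |x| ≤ 2 * |x| := by linarith [abs_nonneg x]
        _ = (2 * |x|) ^ (1 : ℝ) := (rpow_one _).symm
        _ ≤ _ := rpow_le_rpow_of_exponent_le (by linarith) (by linarith)
    have h5 : -(q * x) ≤ q * |x| := by nlinarith [neg_abs_le x]
    have h6 : 0 ≤ q * (q - 1) / 2 * x ^ 2 := by
      have : 0 ≤ q - 1 := by linarith
      positivity
    have h7 := mul_le_mul_of_nonneg_left h4 (by linarith : 0 ≤ q)
    nlinarith [mul_nonneg h3.le hxq, mul_nonneg h3.le hxm, mul_nonneg h2.le hxq,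
      mul_nonneg h2.le hxm, mul_nonneg hC hxq, mul_nonneg hC hxm]

/-- Homogeneous form of `abs_one_add_rpow_le`. -/
lemma abs_add_rpow_le {q : ℝ} (hq : 2 < q) : ∃ C : ℝ, 0 ≤ C ∧ ∀ x y : ℝ, 0 < x →
    |x + y| ^ q ≤ x ^ q + q * x ^ (q - 1) * y + q * (q - 1) / 2 * x ^ (q - 2) * y ^ 2 +
      C * (|y| ^ q + x ^ (q - min q 3) * |y| ^ min q 3) := by
  obtain ⟨C, hC, h⟩ := abs_one_add_rpow_le hq
  refine ⟨C, hC, fun x y hx => ?_⟩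
  have h1 := mul_le_mul_of_nonneg_left (h (y / x)) (rpow_pos_of_pos hx q).le
  have e1 : x ^ q * |1 + y / x| ^ q = |x + y| ^ q := by
    rw [← mul_rpow hx.le (abs_nonneg _)]
    congr 1
    rw [← abs_of_pos hx, ← abs_mul, abs_of_pos hx]
    congr 1
    field_simp
  have e2 : x ^ (q - 1) = x ^ q / x := rpow_sub_one hx.ne' q
  have e3 : x ^ (q - 2) = x ^ q / x ^ 2 := by
    rw [rpow_sub hx, rpow_two]
  have e4 : x ^ (q - min q 3) = x ^ q / x ^ min q 3 := rpow_sub hx _ _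
  have e5 : |y / x| ^ q = |y| ^ q / x ^ q := by
    rw [abs_div, abs_of_pos hx, div_rpow (abs_nonneg _) hx.le]
  have e6 : |y / x| ^ min q 3 = |y| ^ min q 3 / x ^ min q 3 := by
    rw [abs_div, abs_of_pos hx, div_rpow (abs_nonneg _) hx.le]
  rw [e1, e5, e6] at h1
  rw [e2, e3, e4]
  refine h1.trans (le_of_eq ?_)
  have := (rpow_pos_of_pos hx q).ne'
  have := (rpow_pos_of_pos hx (min q 3)).ne'
  field_simp

set_option maxHeartbeats 1000000 in
/-- Pointwise expansion of `|u + μ (u a + r)|^q`, where `u a` plays the role of the zero mode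
(bounded relative to `u`) and `r` that of the remainder (not controlled by `u`). -/
lemma pointwise_expansion {q : ℝ} (hq : 2 < q) (M a₀ : ℝ) (hM : 0 < M) (ha₀ : 0 ≤ a₀) :
    ∃ K : ℝ, 0 ≤ K ∧ ∀ u a μ r : ℝ, 0 < u → u ≤ M → |a| ≤ a₀ → |μ| ≤ 1 → |μ| * a₀ ≤ 1 / 2 →
    |u + μ * (u * a + r)| ^ q ≤ u ^ q + q * μ * (u ^ q * a) +
      q * (q - 1) / 2 * μ ^ 2 * (u ^ q * a ^ 2) + binCoef q 3 * μ ^ 3 * (u ^ q * a ^ 3) +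
      binCoef q 4 * μ ^ 4 * (u ^ q * a ^ 4) + q * μ * (u ^ (q - 1) * r) +
      q * (q - 1) * μ ^ 2 * (u ^ (q - 1) * a * r) +
      q * (q - 1) * (q - 2) / 2 * μ ^ 3 * (u ^ (q - 1) * a ^ 2 * r) +
      q * (q - 1) / 2 * μ ^ 2 * (u ^ (q - 2) * r ^ 2) +
      K * (|μ| ^ 5 * u ^ q + |μ| ^ min q 3 * (|r| ^ q + r ^ 2)) := by
  obtain ⟨C, hC, h⟩ := abs_add_rpow_le hq
  obtain ⟨C5, hC5, h5⟩ := binomial_taylor 5 q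
  obtain ⟨C3, hC3, h3⟩ := binomial_taylor 3 (q - 1)
  obtain ⟨C1, hC1, h1⟩ := binomial_taylor 1 (q - 2)
  set m := min q 3 with hm
  have hm2 : 2 < m := lt_min hq (by norm_num)
  have hmq : m ≤ q := min_le_left _ _
  have hm3 : m ≤ 3 := min_le_right _ _
  have hq1 : 0 < q - 1 := by linarith
  refine ⟨C5 * a₀ ^ 5 + q * C3 * a₀ ^ 3 +
    (q * C3 * a₀ ^ 3 + q * (q - 1) / 2 * C1 * a₀) * M ^ (q - 2) + C * (1 + (2 * M) ^ (q - m)),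
    by positivity, fun u a μ r hu huM ha hμ1 hμ => ?_⟩
  have hμa : |μ * a| ≤ 1 / 2 := by
    rw [abs_mul]; exact (mul_le_mul_of_nonneg_left ha (abs_nonneg _)).trans hμ
  have hb := abs_le.1 hμa
  have hb0 : 0 < 1 + μ * a := by linarith
  have hx : 0 < u * (1 + μ * a) := by positivity
  have H := h (u * (1 + μ * a)) (μ * r) hx
  have e0 : u * (1 + μ * a) + μ * r = u + μ * (u * a + r) := by ring
  rw [e0, mul_rpow hu.le hb0.le, mul_rpow hu.le hb0.le, mul_rpow hu.le hb0.le] at H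
  set D := u ^ (q - 2) with hD
  have hDpos : 0 < D := rpow_pos_of_pos hu _
  have eB : u ^ (q - 1) = D * u := by
    rw [hD, ← rpow_add_one hu.ne']; congr 1; ring
  have eA : u ^ q = D * u ^ 2 := by
    rw [hD, ← rpow_two, ← rpow_add hu]; congr 1; ring
  have hDM : D ≤ M ^ (q - 2) := rpow_le_rpow hu.le huM (by linarith)
  have hr := abs_nonneg r
  have hz := abs_nonneg μ
  have hrm : |r| ^ m ≤ |r| ^ q + r ^ 2 := by
    rcases le_total |r| 1 with hr1 | hr1
    · have : |r| ^ m ≤ |r| ^ (2 : ℝ) := by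
        rcases eq_or_lt_of_le hr with h0 | h0
        · rw [← h0, zero_rpow (by linarith), zero_rpow (by norm_num)]
        · exact rpow_le_rpow_of_exponent_ge h0 hr1 hm2.le
      rw [rpow_two, sq_abs] at this
      have : 0 ≤ |r| ^ q := by positivity
      linarith
    · have : |r| ^ m ≤ |r| ^ q := rpow_le_rpow_of_exponent_le hr1 hmq
      nlinarith [sq_nonneg r]
  have hμpow : ∀ k : ℝ, m ≤ k → |μ| ^ k ≤ |μ| ^ m := by
    intro k hk
    rcases eq_or_lt_of_le hz with h0 | h0
    · rw [← h0, zero_rpow (by linarith), zero_rpow (by linarith)]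
    · exact rpow_le_rpow_of_exponent_ge h0 hμ1 hk
  have hμ3 : |μ| ^ 3 ≤ |μ| ^ m := by
    have := hμpow 3 hm3
    rwa [show (3 : ℝ) = ((3 : ℕ) : ℝ) by norm_num, rpow_natCast] at this
  have hμm : 0 ≤ |μ| ^ m := by positivity
  have hrq : 0 ≤ |r| ^ q := by positivity
  -- `E2` bounds the remainder of the expansion in `r`; `F5`, `F3`, `F1` those of the Taylor
  -- polynomials of its three coefficients in `μ a`.
  have E1 : (u * (1 + μ * a)) ^ (q - m) ≤ (2 * M) ^ (q - m) :=
    rpow_le_rpow hx.le (by nlinarith) (by linarith)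
  have E2 : C * (|μ * r| ^ q + (u * (1 + μ * a)) ^ (q - m) * |μ * r| ^ m) ≤
      C * (1 + (2 * M) ^ (q - m)) * (|μ| ^ m * (|r| ^ q + r ^ 2)) := by
    rw [abs_mul, mul_rpow hz hr, mul_rpow hz hr, mul_assoc C]
    refine mul_le_mul_of_nonneg_left ?_ hC
    have i1 : |μ| ^ q * |r| ^ q ≤ |μ| ^ m * (|r| ^ q + r ^ 2) := by
      refine mul_le_mul (hμpow q hmq) (by nlinarith [sq_nonneg r]) hrq hμm
    have i2 : |μ| ^ m * |r| ^ m ≤ |μ| ^ m * (|r| ^ q + r ^ 2) :=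
      mul_le_mul_of_nonneg_left hrm hμm
    have i3 := mul_le_mul E1 i2 (by positivity) (by positivity)
    linarith
  have hpowa : ∀ k : ℕ, |μ * a| ^ k ≤ |μ| ^ k * a₀ ^ k := by
    intro k
    rw [abs_mul, mul_pow]
    gcongr
  have E5 := (abs_le.1 (h5 _ hμa)).2
  have E3 := h3 _ hμa
  have E0 := (abs_le.1 (h1 _ hμa)).2
  have E5' := mul_le_mul_of_nonneg_left (hpowa 5) hC5
  have E3' := mul_le_mul_of_nonneg_left (hpowa 3) hC3
  have E0' := mul_le_mul_of_nonneg_left (hpowa 1) hC1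
  set b5 := (1 + μ * a) ^ q
  set b3 := (1 + μ * a) ^ (q - 1)
  set b1 := (1 + μ * a) ^ (q - 2)
  have F5 : D * u ^ 2 * (b5 - ∑ j ∈ Finset.range 5, binCoef q j * (μ * a) ^ j) ≤
      C5 * a₀ ^ 5 * (|μ| ^ 5 * (D * u ^ 2)) := by
    have := mul_le_mul_of_nonneg_left (E5.trans E5') (by positivity : 0 ≤ D * u ^ 2)
    linarith
  have F3 : q * (D * u * (μ * r)) * (b3 - ∑ j ∈ Finset.range 3, binCoef (q - 1) j * (μ * a) ^ j)
      ≤ q * C3 * a₀ ^ 3 * (|μ| ^ 5 * (D * u ^ 2)) +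
        q * C3 * a₀ ^ 3 * M ^ (q - 2) * (|μ| ^ m * r ^ 2) := by
    have i1 : |q * (D * u * (μ * r))| = q * (D * u * (|μ| * |r|)) := by
      simp only [abs_mul, abs_of_pos hu, abs_of_pos hDpos, abs_of_pos (by linarith : 0 < q)]
    have i2 := mul_le_mul_of_nonneg_left (E3.trans E3')
      (abs_nonneg (q * (D * u * (μ * r))))
    rw [← abs_mul, i1] at i2
    refine (le_abs_self _).trans (i2.trans ?_)
    -- The mixed error `|μ|⁴ u^{q-1} |r|` is split into `|μ|⁵ u^q` and `|μ|³ u^{q-2} r²`.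
    have i3 : |μ| * u * |r| ≤ |μ| ^ 2 * u ^ 2 + r ^ 2 := by
      rw [← sq_abs r]
      nlinarith [sq_nonneg (|μ| * u - |r|), sq_nonneg (|μ| * u), sq_nonneg |r|]
    have i4 := mul_le_mul_of_nonneg_left i3 (by positivity : 0 ≤ q * C3 * a₀ ^ 3 * D * |μ| ^ 3)
    have i5 : D * |μ| ^ 3 ≤ M ^ (q - 2) * |μ| ^ m := mul_le_mul hDM hμ3 (by positivity) (by positivity)
    have i6 := mul_le_mul_of_nonneg_left i5 (by positivity : 0 ≤ q * C3 * a₀ ^ 3 * r ^ 2)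
    linarith
  have F1 : q * (q - 1) / 2 * (D * (μ * r) ^ 2) *
      (b1 - ∑ j ∈ Finset.range 1, binCoef (q - 2) j * (μ * a) ^ j) ≤
      q * (q - 1) / 2 * C1 * a₀ * M ^ (q - 2) * (|μ| ^ m * r ^ 2) := by
    have i1 := mul_le_mul_of_nonneg_left (E0.trans E0')
      (by positivity : 0 ≤ q * (q - 1) / 2 * (D * (μ * r) ^ 2))
    have i5 : D * |μ| ^ 3 ≤ M ^ (q - 2) * |μ| ^ m := mul_le_mul hDM hμ3 (by positivity) (by positivity)
    have i6 := mul_le_mul_of_nonneg_left i5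
      (by positivity : 0 ≤ q * (q - 1) / 2 * C1 * a₀ * r ^ 2)
    rw [← sq_abs (μ * r), abs_mul] at i1 ⊢
    rw [← sq_abs r] at i6 ⊢
    linarith
  have G1 : 0 ≤ (q * C3 * a₀ ^ 3 + q * (q - 1) / 2 * C1 * a₀) * M ^ (q - 2) * (|μ| ^ 5 * (D * u ^ 2)) := by
    positivity
  have G2 : 0 ≤ C * (1 + (2 * M) ^ (q - m)) * (|μ| ^ 5 * (D * u ^ 2)) := by positivity
  have G3 : 0 ≤ (C5 * a₀ ^ 5 + q * C3 * a₀ ^ 3) * (|μ| ^ m * (|r| ^ q + r ^ 2)) := by positivity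
  have G4 : 0 ≤ (q * C3 * a₀ ^ 3 + q * (q - 1) / 2 * C1 * a₀) * M ^ (q - 2) *
      (|μ| ^ m * |r| ^ q) := by positivity
  rw [eA, eB] at H ⊢
  simp only [Finset.sum_range_succ, Finset.sum_range_zero, zero_add, pow_zero, mul_one] at F5 F3 F1
  simp only [show ∀ p, binCoef p 0 = 1 from fun p => rfl,
    show ∀ p, binCoef p 1 = p from fun p => by simp [binCoef],
    show ∀ p, binCoef p 2 = p * (p - 1) / 2 from fun p => by simp [binCoef]; ring] at F5 F3 F1
  refine H.trans ?_
  linarith only [F5, F3, F1, G1, G2, G3, G4, E2]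

/-! ### Expansion of the root -/

/-- Second-order upper expansion of the concave power `L ↦ N^{1-2/q} L^{2/q}` at `L = N`. -/
lemma root_expansion {q N : ℝ} (hq : 2 < q) (hN : 0 < N) : ∃ C : ℝ, 0 ≤ C ∧ ∀ L X : ℝ, 0 ≤ L →
    L ≤ N + X → |X| ≤ N / 2 →
    N ^ (1 - 2 / q) * L ^ (2 / q) ≤ N + 2 / q * X - (q - 2) / q ^ 2 / N * X ^ 2 + C * |X| ^ 3 := by
  obtain ⟨C, hC, h⟩ := binomial_taylor 3 (2 / q)
  refine ⟨C / N ^ 2, by positivity, fun L X hL hLX hX => ?_⟩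
  have hx : |X / N| ≤ 1 / 2 := by
    rw [abs_div, abs_of_pos hN, div_le_iff₀ hN]; linarith
  have h1 := (abs_le.1 (h _ hx)).2
  have hx' := abs_le.1 hx
  have h2 : L ^ (2 / q) ≤ N ^ (2 / q) * (1 + X / N) ^ (2 / q) := by
    rw [← mul_rpow hN.le (by linarith)]
    refine rpow_le_rpow hL (hLX.trans (le_of_eq ?_)) (by positivity)
    field_simp
  have h3 := mul_le_mul_of_nonneg_left h2 (rpow_nonneg hN.le (1 - 2 / q))
  have h4 : N ^ (1 - 2 / q) * N ^ (2 / q) = N := by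
    rw [← rpow_add hN]; simp
  rw [← mul_assoc, h4] at h3
  have h5 := mul_le_mul_of_nonneg_left h1 hN.le
  simp only [Finset.sum_range_succ, Finset.sum_range_zero, binCoef] at h5
  rw [abs_div, abs_of_pos hN] at h5
  have hq0 : q ≠ 0 := by linarith
  have e1 : N * (C * (|X| / N) ^ 3) = C / N ^ 2 * |X| ^ 3 := by field_simp
  have e2 : N * ((1 + X / N) ^ (2 / q) - (0 + 1 * (X / N) ^ 0 + 2 / q / (↑(0 : ℕ) + 1) * 1 * (X / N) ^ 1
      + 2 / q / (↑(1 : ℕ) + 1) * ((2 / q - 1) / (↑(0 : ℕ) + 1) * 1) * (X / N) ^ 2)) =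
      N * (1 + X / N) ^ (2 / q) - (N + 2 / q * X - (q - 2) / q ^ 2 / N * X ^ 2) := by
    push_cast
    field_simp
    ring
  rw [e1, e2] at h5
  linarith

set_option maxHeartbeats 1000000 in
/-- Bookkeeping of the orders in `μ`: an upper expansion of `‖v‖_q^q` turns into one of
`N^{1-2/q} ‖v‖_q²`. Here `ρ` stands for `‖R‖²`. -/
lemma norm_expansion {q N : ℝ} (hq : 2 < q) (hN : 0 < N) (P Q S₀ T₀ K : ℝ)
    (hS₀ : 0 ≤ S₀) (hT₀ : 0 ≤ T₀) (hK : 0 ≤ K) :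
    ∃ C δ : ℝ, 0 ≤ C ∧ 0 < δ ∧ ∀ μ ρ S T E L : ℝ, |μ| ≤ δ → 0 ≤ ρ → ρ ≤ 1 → |S| ≤ S₀ →
    |T| ≤ T₀ * ρ → |E| ≤ K * (|μ| ^ 5 + |μ| ^ min q 3 * ρ) → 0 ≤ L →
    L ≤ N + (q * (q - 1) / 2 * μ ^ 2 * P + binCoef q 4 * μ ^ 4 * Q +
      q * (q - 1) * (q - 2) / 2 * μ ^ 3 * S + q * (q - 1) / 2 * μ ^ 2 * T + E) →
    N ^ (1 - 2 / q) * L ^ (2 / q) ≤ N + (q - 1) * μ ^ 2 * P +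
      (q - 1) * (q - 2) * (q - 3) / 12 * μ ^ 4 * Q - (q - 1) ^ 2 * (q - 2) / 4 / N * μ ^ 4 * P ^ 2 +
      (q - 1) * (q - 2) * μ ^ 3 * S + (q - 1) * μ ^ 2 * T +
      C * (|μ| ^ 5 + |μ| ^ min q 3 * ρ) := by
  obtain ⟨C₁, hC₁, h⟩ := root_expansion hq hN
  set m := min q 3 with hm
  have hm2 : 2 < m := lt_min hq (by norm_num)
  have hm3 : m ≤ 3 := min_le_right _ _
  have hq0 : 0 < q := by linarith
  have hq1 : 0 < q - 1 := by linarith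
  have hq2 : 0 < q - 2 := by linarith
  set a := q * (q - 1) / 2 * P with ha
  set Y₀ := |binCoef q 4 * Q| + q * (q - 1) * (q - 2) / 2 * S₀ + q * (q - 1) / 2 * T₀ + K with hY₀
  have hY₀' : 0 ≤ Y₀ := by positivity
  set X₀ := |a| + 2 * Y₀ with hX₀
  have hX₀' : 0 ≤ X₀ := by positivity
  refine ⟨2 / q * K + (q - 2) / q ^ 2 / N * (2 * |a| * Y₀) + C₁ * X₀ ^ 3,
    min 1 (N / (2 * (X₀ + 1))), by positivity, by positivity, ?_⟩
  intro μ ρ S T E L hμ hρ0 hρ1 hS hT hE hL hLX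
  have hμ1 : |μ| ≤ 1 := hμ.trans (min_le_left _ _)
  have hμ2 : |μ| * (X₀ + 1) ≤ N / 2 := by
    have := hμ.trans (min_le_right _ _)
    rw [le_div_iff₀ (by positivity)] at this
    linarith
  have hz := abs_nonneg μ
  have pw : ∀ k l : ℕ, k ≤ l → |μ| ^ l ≤ |μ| ^ k := fun k l hkl =>
    pow_le_pow_of_le_one hz hμ1 hkl
  have hμm : 0 ≤ |μ| ^ m := by positivity
  have pm : |μ| ^ m ≤ |μ| ^ 2 ∧ |μ| ^ 4 ≤ |μ| ^ m := by
    rcases eq_or_lt_of_le hz with h0 | h0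
    · rw [← h0, zero_rpow (by linarith)]; norm_num
    · constructor
      · rw [← rpow_natCast]
        exact rpow_le_rpow_of_exponent_ge h0 hμ1 (by push_cast; linarith)
      · rw [← rpow_natCast]
        exact rpow_le_rpow_of_exponent_ge h0 hμ1 (by push_cast; linarith)
  set Y := binCoef q 4 * μ ^ 4 * Q + q * (q - 1) * (q - 2) / 2 * μ ^ 3 * S +
    q * (q - 1) / 2 * μ ^ 2 * T + E with hY
  have hYb : |Y| ≤ Y₀ * (|μ| ^ 3 + |μ| ^ 2 * ρ) := by
    have i1 : |binCoef q 4 * μ ^ 4 * Q| ≤ |binCoef q 4 * Q| * |μ| ^ 3 := by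
      rw [mul_right_comm, abs_mul, abs_pow]
      exact mul_le_mul_of_nonneg_left (pw 3 4 (by norm_num)) (abs_nonneg _)
    have i2 : |q * (q - 1) * (q - 2) / 2 * μ ^ 3 * S| ≤ q * (q - 1) * (q - 2) / 2 * S₀ * |μ| ^ 3 := by
      rw [abs_mul, abs_mul, abs_pow, abs_of_pos (by positivity : 0 < q * (q - 1) * (q - 2) / 2)]
      have := mul_le_mul_of_nonneg_left hS (by positivity : 0 ≤ q * (q - 1) * (q - 2) / 2 * |μ| ^ 3)
      linarith
    have i3 : |q * (q - 1) / 2 * μ ^ 2 * T| ≤ q * (q - 1) / 2 * T₀ * (|μ| ^ 2 * ρ) := by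
      rw [abs_mul, abs_mul, abs_pow, abs_of_pos (by positivity : 0 < q * (q - 1) / 2)]
      have := mul_le_mul_of_nonneg_left hT (by positivity : 0 ≤ q * (q - 1) / 2 * |μ| ^ 2)
      linarith
    have i4 : K * (|μ| ^ 5 + |μ| ^ m * ρ) ≤ K * (|μ| ^ 3 + |μ| ^ 2 * ρ) := by
      have := pw 3 5 (by norm_num)
      have := mul_le_mul_of_nonneg_right pm.1 hρ0
      gcongr
    have j1 := abs_add_le (binCoef q 4 * μ ^ 4 * Q + q * (q - 1) * (q - 2) / 2 * μ ^ 3 * S +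
      q * (q - 1) / 2 * μ ^ 2 * T) E
    have j2 := abs_add_le (binCoef q 4 * μ ^ 4 * Q + q * (q - 1) * (q - 2) / 2 * μ ^ 3 * S)
      (q * (q - 1) / 2 * μ ^ 2 * T)
    have j3 := abs_add_le (binCoef q 4 * μ ^ 4 * Q) (q * (q - 1) * (q - 2) / 2 * μ ^ 3 * S)
    have k1 : 0 ≤ |binCoef q 4 * Q| * (|μ| ^ 2 * ρ) := by positivity
    have k2 : 0 ≤ q * (q - 1) * (q - 2) / 2 * S₀ * (|μ| ^ 2 * ρ) := by positivity
    have k3 : 0 ≤ q * (q - 1) / 2 * T₀ * |μ| ^ 3 := by positivity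
    rw [hY₀]
    linarith
  set X := a * μ ^ 2 + Y with hX
  have hXb : |X| ≤ X₀ * |μ| ^ 2 := by
    have j1 := abs_add_le (a * μ ^ 2) Y
    rw [abs_mul, abs_pow] at j1
    have k1 := mul_le_mul_of_nonneg_left (pw 2 3 (by norm_num)) hY₀'
    have k2 := mul_le_mul_of_nonneg_left hρ1 (by positivity : 0 ≤ Y₀ * |μ| ^ 2)
    rw [hX₀]
    linarith
  have hXN : |X| ≤ N / 2 := by
    have := mul_le_mul_of_nonneg_left (pw 1 2 (by norm_num)) hX₀'
    rw [pow_one] at this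
    linarith
  have H := h L X hL (by rw [hX, hY, ha]; linarith) hXN
  have I1 : |X| ^ 3 ≤ X₀ ^ 3 * |μ| ^ 5 := by
    calc |X| ^ 3 ≤ (X₀ * |μ| ^ 2) ^ 3 := by gcongr
      _ = X₀ ^ 3 * |μ| ^ 6 := by ring
      _ ≤ X₀ ^ 3 * |μ| ^ 5 := mul_le_mul_of_nonneg_left (pw 5 6 (by norm_num)) (by positivity)
  -- Only the leading part `a μ²` of `X` contributes to `X²` at order `μ⁴`; `Y²` has a good sign.
  have I2 : a ^ 2 * μ ^ 4 - 2 * |a| * Y₀ * (|μ| ^ 5 + |μ| ^ m * ρ) ≤ X ^ 2 := by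
    have k1 : |a * μ ^ 2 * Y| ≤ |a| * |μ| ^ 2 * (Y₀ * (|μ| ^ 3 + |μ| ^ 2 * ρ)) := by
      rw [abs_mul, abs_mul, abs_pow]
      exact mul_le_mul_of_nonneg_left hYb (by positivity)
    have k2 := (abs_le.1 k1).1
    have k3 := mul_le_mul_of_nonneg_left (mul_le_mul_of_nonneg_right pm.2 hρ0)
      (by positivity : 0 ≤ |a| * Y₀)
    have k4 : X ^ 2 = a ^ 2 * μ ^ 4 + 2 * (a * μ ^ 2 * Y) + Y ^ 2 := by rw [hX]; ring
    nlinarith [sq_nonneg Y]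
  have I3 := mul_le_mul_of_nonneg_left I2 (by positivity : 0 ≤ (q - 2) / q ^ 2 / N)
  have I4 := mul_le_mul_of_nonneg_left I1 hC₁
  have I5 : 2 / q * E ≤ 2 / q * K * (|μ| ^ 5 + |μ| ^ m * ρ) := by
    rw [mul_assoc]
    exact mul_le_mul_of_nonneg_left ((le_abs_self _).trans hE) (by positivity)
  have I6 : 0 ≤ C₁ * X₀ ^ 3 * (|μ| ^ m * ρ) := by positivity
  have e1 : 2 / q * X = (q - 1) * μ ^ 2 * P + (q - 1) * (q - 2) * (q - 3) / 12 * μ ^ 4 * Q +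
      (q - 1) * (q - 2) * μ ^ 3 * S + (q - 1) * μ ^ 2 * T + 2 / q * E := by
    rw [hX, hY, ha]
    simp only [binCoef]
    push_cast
    field_simp
    ring
  have e2 : (q - 2) / q ^ 2 / N * (a ^ 2 * μ ^ 4) =
      (q - 1) ^ 2 * (q - 2) / 4 / N * μ ^ 4 * P ^ 2 := by
    rw [ha]; field_simp; ring
  rw [mul_sub, e2] at I3
  rw [e1] at H
  linarith

/-! ### The surface measure and integration by parts on the sphere -/

instance (d : ℕ) : IsFiniteMeasure (sphMeasure d) := by unfold sphMeasure; infer_instance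

/-- The restriction of a linear isometry to the unit sphere. -/
noncomputable def sphMap (d : ℕ) (D : Ed d ≃ₗᵢ[ℝ] Ed d) (ω : Sph d) : Sph d :=
  ⟨D ω, by simp⟩

lemma continuous_sphMap (d : ℕ) (D : Ed d ≃ₗᵢ[ℝ] Ed d) : Continuous (sphMap d D) :=
  Continuous.subtype_mk (D.continuous.comp continuous_subtype_val) _

open scoped Pointwise in
/-- The surface measure of `A` is defined by the volume of the cone over `A`, which `D` preserves. -/
lemma measurePreserving_sphMap (d : ℕ) (D : Ed d ≃ₗᵢ[ℝ] Ed d) :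
    MeasurePreserving (sphMap d D) (sphMeasure d) (sphMeasure d) := by
  refine ⟨(continuous_sphMap d D).measurable, ?_⟩
  ext s hs
  have hm := (continuous_sphMap d D).measurable
  rw [Measure.map_apply hm hs]
  unfold sphMeasure
  rw [Measure.toSphere_apply' _ hs, Measure.toSphere_apply' _ (hm hs)]
  congr 1
  have hpre : Ioo (0 : ℝ) 1 • (((↑) : Sph d → Ed d) '' (sphMap d D ⁻¹' s)) =
      D ⁻¹' (Ioo (0 : ℝ) 1 • (((↑) : Sph d → Ed d) '' s)) := by
    ext x
    simp only [Set.mem_smul, mem_image, mem_preimage]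
    constructor
    · rintro ⟨r, hr, _, ⟨ω, hω, rfl⟩, rfl⟩
      exact ⟨r, hr, D ω, ⟨sphMap d D ω, hω, rfl⟩, by simp⟩
    · rintro ⟨r, hr, _, ⟨ω, hω, rfl⟩, h⟩
      have hD : sphMap d D ⟨D.symm ω, by simp⟩ = ω := by
        ext1; simp [sphMap]
      refine ⟨r, hr, D.symm ω, ⟨⟨D.symm ω, by simp⟩, by rw [hD]; exact hω, rfl⟩, ?_⟩
      apply D.injective
      rw [← h]; simp
  rw [hpre, (LinearIsometryEquiv.measurePreserving D).measure_preimage_emb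
    D.toHomeomorph.measurableEmbedding]

lemma integral_sphMap (d : ℕ) (D : Ed d ≃ₗᵢ[ℝ] Ed d) {f : Sph d → ℝ} (hf : Continuous f) :
    ∫ ω, f (sphMap d D ω) ∂sphMeasure d = ∫ ω, f ω ∂sphMeasure d := by
  have h := measurePreserving_sphMap d D
  rw [← integral_map h.measurable.aemeasurable (by rw [h.map_eq]; exact hf.aestronglyMeasurable),
    h.map_eq]

lemma integral_sph_odd (d : ℕ) {f : Sph d → ℝ} (hf : Continuous f)
    (hodd : ∀ ω, f (sphMap d (LinearIsometryEquiv.neg ℝ) ω) = - f ω) :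
    ∫ ω, f ω ∂sphMeasure d = 0 := by
  have h := integral_sphMap d (LinearIsometryEquiv.neg ℝ) hf
  simp only [hodd, integral_neg] at h
  linarith

/-- The standard basis vector of `ℝ^d`. -/
noncomputable abbrev bvec (d : ℕ) (i : Fin d) : Ed d := EuclideanSpace.single i 1

/-- Rotation by the angle `t` in the coordinate plane `(i, j)`, as a linear map. -/
noncomputable def rotLin (d : ℕ) (i j : Fin d) (t : ℝ) : Ed d →ₗ[ℝ] Ed d where
  toFun x := x + ((cos t - 1) * x i - sin t * x j) • bvec d i +
    (sin t * x i + (cos t - 1) * x j) • bvec d j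
  map_add' x y := by
    simp only [PiLp.add_apply]
    module
  map_smul' c x := by
    simp only [PiLp.smul_apply, smul_eq_mul, RingHom.id_apply]
    module

lemma norm_rotLin (d : ℕ) {i j : Fin d} (hij : i ≠ j) (t : ℝ) (x : Ed d) :
    ‖rotLin d i j t x‖ = ‖x‖ := by
  have h : ‖rotLin d i j t x‖ ^ 2 = ‖x‖ ^ 2 := by
    simp only [rotLin, LinearMap.coe_mk, AddHom.coe_mk]
    rw [norm_add_sq_real, norm_add_sq_real]
    simp only [inner_smul_right, inner_add_left, inner_smul_left, norm_smul, mul_pow,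
      EuclideanSpace.inner_single_right, PiLp.norm_single]
    simp [hij]
    have := sin_sq_add_cos_sq t
    linear_combination (x i ^ 2 + x j ^ 2) * this
  exact (pow_left_inj₀ (norm_nonneg _) (norm_nonneg _) (by norm_num)).1 h

/-- Rotation by the angle `t` in the coordinate plane `(i, j)`. -/
noncomputable def rot (d : ℕ) {i j : Fin d} (hij : i ≠ j) (t : ℝ) : Ed d ≃ₗᵢ[ℝ] Ed d :=
  LinearIsometry.toLinearIsometryEquiv ⟨rotLin d i j t, norm_rotLin d hij t⟩ rfl

lemma rot_apply (d : ℕ) {i j : Fin d} (hij : i ≠ j) (t : ℝ) (x : Ed d) :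
    rot d hij t x = x + ((cos t - 1) * x i - sin t * x j) • bvec d i +
    (sin t * x i + (cos t - 1) * x j) • bvec d j := rfl

/-- Infinitesimal rotation invariance of the surface measure. -/
lemma integral_rot_deriv (d : ℕ) {i j : Fin d} (hij : i ≠ j) {g : Ed d → ℝ}
    (hg : ContDiff ℝ 1 g) :
    ∫ ω : Sph d, fderiv ℝ g ω ((ω : Ed d) i • bvec d j - (ω : Ed d) j • bvec d i) ∂sphMeasure d
      = 0 := by
  set V : ℝ → Ed d → Ed d := fun t x => (-sin t * x i - cos t * x j) • bvec d i +
    (cos t * x i - sin t * x j) • bvec d j with hV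
  have hfc : Continuous (fderiv ℝ g) := hg.continuous_fderiv (by norm_num)
  have hcoord : ∀ k : Fin d, Continuous fun p : ℝ × Sph d => (p.2 : Ed d) k := fun k => by fun_prop
  have hF'c : Continuous fun p : ℝ × Sph d => fderiv ℝ g (rot d hij p.1 p.2) (V p.1 p.2) := by
    refine Continuous.clm_apply (hfc.comp ?_) ?_
    · simp only [rot_apply]
      have := hcoord i
      have := hcoord j
      fun_prop
    · simp only [hV]
      have := hcoord i
      have := hcoord j
      fun_prop
  obtain ⟨B, hB⟩ := ((isCompact_Icc (a := (-1 : ℝ)) (b := 1)).prod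
    (isCompact_univ (X := Sph d))).exists_bound_of_continuousOn hF'c.continuousOn
  have key := hasDerivAt_integral_of_dominated_loc_of_deriv_le (μ := sphMeasure d) (x₀ := (0 : ℝ))
    (F := fun t (ω : Sph d) => g (rot d hij t ω))
    (F' := fun t (ω : Sph d) => fderiv ℝ g (rot d hij t ω) (V t ω))
    (s := Icc (-1) 1) (bound := fun _ => B)
    (Icc_mem_nhds (by norm_num) (by norm_num))
    (Eventually.of_forall fun t => by
      have : Continuous fun ω : Sph d => g (rot d hij t ω) := by
        have := hg.continuous
        fun_prop
      exact this.aestronglyMeasurable)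
    (by
      have : Continuous fun ω : Sph d => g (rot d hij 0 ω) := by
        have := hg.continuous
        fun_prop
      exact this.integrable_of_hasCompactSupport (HasCompactSupport.of_compactSpace _))
    (hF'c.comp (by fun_prop : Continuous fun ω : Sph d => ((0 : ℝ), ω))).aestronglyMeasurable
    (Eventually.of_forall fun ω t ht => hB (t, ω) ⟨ht, mem_univ _⟩)
    (integrable_const _)
    (Eventually.of_forall fun ω t _ => by
      have h1 : HasDerivAt (fun t => rot d hij t (ω : Ed d)) (V t ω) t := by
        simp only [rot_apply, hV]
        have hc := (hasDerivAt_cos t).sub_const 1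
        have hs := hasDerivAt_sin t
        have a1 := ((hc.mul_const ((ω : Ed d) i)).sub (hs.mul_const ((ω : Ed d) j))).smul_const
          (bvec d i)
        have a2 := ((hs.mul_const ((ω : Ed d) i)).add (hc.mul_const ((ω : Ed d) j))).smul_const
          (bvec d j)
        have a3 := (a1.const_add (ω : Ed d)).add a2
        refine HasDerivAt.congr_deriv a3 ?_
        congr 2
        ring
      exact ((hg.differentiable (by norm_num)) _).hasFDerivAt.comp_hasDerivAt t h1)
  have hconst : (fun t => ∫ ω : Sph d, g (rot d hij t ω) ∂sphMeasure d) =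
      fun _ => ∫ ω : Sph d, g ω ∂sphMeasure d := by
    funext t
    exact integral_sphMap d (rot d hij t) (f := fun ω => g ω)
      (hg.continuous.comp continuous_subtype_val)
  have h0 := key.2
  rw [hconst] at h0
  have h1 := h0.unique (hasDerivAt_const _ _)
  rw [← h1]
  refine integral_congr_ae (Eventually.of_forall fun ω => ?_)
  have e1 : rot d hij 0 (ω : Ed d) = ω := by simp [rot_apply]
  simp only [e1]
  congr 1
  simp only [hV, sin_zero, cos_zero]
  module

lemma integrable_sph {d : ℕ} {f : Sph d → ℝ} (hf : Continuous f) : Integrable f (sphMeasure d) :=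
  hf.integrable_of_hasCompactSupport (HasCompactSupport.of_compactSpace _)

/-- Integration by parts on the sphere against the coordinate `ω_l`, a spherical harmonic with
eigenvalue `d - 1`; it is the sum over `i` of the infinitesimal rotation identities in the planes
`(i, l)` applied to `x_i f`. -/
lemma sph_ibp (d : ℕ) (l : Fin d) {f : Ed d → ℝ} (hf : ContDiff ℝ 1 f) :
    ∫ ω : Sph d, (fderiv ℝ f ω (bvec d l) - (ω : Ed d) l * fderiv ℝ f ω ω) ∂sphMeasure d =
      ((d : ℝ) - 1) * ∫ ω : Sph d, (ω : Ed d) l * f ω ∂sphMeasure d := by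
  have hfc : Continuous (fderiv ℝ f) := hf.continuous_fderiv (by norm_num)
  have hf0 := hf.continuous
  have hd : Differentiable ℝ f := hf.differentiable (by norm_num)
  have hk : ∀ k : Fin d, Continuous fun ω : Sph d => (ω : Ed d) k := fun k => by fun_prop
  have hfb : ∀ k, Continuous fun ω : Sph d => fderiv ℝ f ω (bvec d k) := fun k => by fun_prop
  have hzero : ∀ i : Fin d, ∫ ω : Sph d, ((ω : Ed d) i ^ 2 * fderiv ℝ f ω (bvec d l) -
      (ω : Ed d) l * ((ω : Ed d) i * fderiv ℝ f ω (bvec d i)) -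
      (if i = l then 0 else 1) * ((ω : Ed d) l * f ω)) ∂sphMeasure d = 0 := by
    intro i
    by_cases hil : i = l
    · subst hil
      have : ∀ ω : Sph d, ((ω : Ed d) i ^ 2 * fderiv ℝ f ω (bvec d i) -
        (ω : Ed d) i * ((ω : Ed d) i * fderiv ℝ f ω (bvec d i)) -
        (if i = i then 0 else 1) * ((ω : Ed d) i * f ω)) = 0 := by
        intro ω; simp; ring
      exact (integral_congr_ae (Eventually.of_forall this)).trans (integral_zero _ _)
    · have hx : ContDiff ℝ 1 fun x : Ed d => x i * f x := by
        refine ContDiff.mul ?_ hf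
        fun_prop
      have h := integral_rot_deriv d hil hx
      rw [← h]
      refine integral_congr_ae (Eventually.of_forall fun ω => ?_)
      have h1 : HasFDerivAt (fun x : Ed d => x i) (EuclideanSpace.proj i : Ed d →L[ℝ] ℝ) (ω : Ed d) :=
        (EuclideanSpace.proj i : Ed d →L[ℝ] ℝ).hasFDerivAt
      have h2 := (h1.mul (hd (ω : Ed d)).hasFDerivAt).fderiv
      have h2' : fderiv ℝ (fun x : Ed d => x i * f x) (ω : Ed d) =
        (ω : Ed d) i • fderiv ℝ f ω + f ω • (EuclideanSpace.proj i : Ed d →L[ℝ] ℝ) := h2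
      simp only [h2']
      simp [hil, map_sub]
      ring
  have hsum := Finset.sum_eq_zero fun i (_ : i ∈ (Finset.univ : Finset (Fin d))) => hzero i
  rw [← integral_finsetSum] at hsum
  · rw [← integral_const_mul, ← sub_eq_zero, ← integral_sub]
    · rw [← hsum]
      refine integral_congr_ae (Eventually.of_forall fun ω => ?_)
      simp only [Finset.sum_sub_distrib, ← Finset.sum_mul, ← Finset.mul_sum]
      have e1 : ∑ i, (ω : Ed d) i ^ 2 = 1 := by
        rw [← EuclideanSpace.real_norm_sq_eq]; simp
      have e2 : fderiv ℝ f (ω : Ed d) (ω : Ed d) =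
          ∑ i, (ω : Ed d) i * fderiv ℝ f ω (bvec d i) := by
        have e3 : (ω : Ed d) = ∑ i, (ω : Ed d) i • bvec d i := by
          ext k; simp [Finset.sum_apply, Pi.single_apply]
        conv_lhs => rw [show fderiv ℝ f (ω : Ed d) (ω : Ed d) = fderiv ℝ f (ω : Ed d) (∑ i, (ω : Ed d) i • bvec d i) by rw [← e3]]
        simp
      have e4 : ∑ i : Fin d, (if i = l then (0 : ℝ) else 1) = d - 1 := by
        have : ∀ i : Fin d, (if i = l then (0 : ℝ) else 1) = 1 - if i = l then 1 else 0 := by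
          intro i; split_ifs <;> norm_num
        simp only [this, Finset.sum_sub_distrib]
        simp
      rw [e1, e2, e4]
      ring
    · exact integrable_sph (by fun_prop)
    · exact integrable_sph (by fun_prop)
  · intro i _
    exact integrable_sph (by fun_prop)

/-! ### The energy form on the cylinder -/

instance (d : ℕ) : SFinite (cylMeasure d) := by unfold cylMeasure; infer_instance

/-- The embedding of the cylinder into the ambient space `ℝ × ℝ^d`. -/
noncomputable def cylEmb (d : ℕ) (p : ℝ × Sph d) : ℝ × Ed d := (p.1, (p.2 : Ed d))

lemma continuous_cylEmb (d : ℕ) : Continuous (cylEmb d) := by unfold cylEmb; fun_prop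

lemma dS_eq {d : ℕ} {φ : ℝ × Ed d → ℝ} (hφ : ContDiff ℝ 1 φ) (p : ℝ × Sph d) :
    dS d φ p = fderiv ℝ φ (cylEmb d p) (1, 0) := by
  have h1 : HasDerivAt (fun s : ℝ => (s, (p.2 : Ed d))) ((1 : ℝ), (0 : Ed d)) p.1 :=
    (hasDerivAt_id _).prodMk (hasDerivAt_const _ _)
  exact (((hφ.differentiable (by norm_num)) (p.1, (p.2 : Ed d))).hasFDerivAt.comp_hasDerivAt
    p.1 h1).deriv

lemma hasDerivAt_slice {d : ℕ} {φ : ℝ × Ed d → ℝ} (hφ : ContDiff ℝ 1 φ) (s : ℝ) (ω : Sph d) :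
    HasDerivAt (fun s => φ (s, (ω : Ed d))) (dS d φ (s, ω)) s := by
  have : DifferentiableAt ℝ (fun s => φ (s, (ω : Ed d))) s := by
    have := hφ.differentiable (by norm_num)
    fun_prop
  exact this.hasDerivAt

lemma contDiff_slice {d : ℕ} {φ : ℝ × Ed d → ℝ} (hφ : ContDiff ℝ 1 φ) (s : ℝ) :
    ContDiff ℝ 1 fun x => φ (s, x) := hφ.comp (by fun_prop)

lemma fderiv_slice {d : ℕ} {φ : ℝ × Ed d → ℝ} (hφ : ContDiff ℝ 1 φ) (s : ℝ) (x : Ed d) :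
    fderiv ℝ (fun x => φ (s, x)) x =
      (fderiv ℝ φ (s, x)).comp (ContinuousLinearMap.inr ℝ ℝ (Ed d)) := by
  have h1 : HasFDerivAt (fun x : Ed d => (s, x)) (ContinuousLinearMap.inr ℝ ℝ (Ed d)) x :=
    hasFDerivAt_prodMk_right s x
  exact (((hφ.differentiable (by norm_num)) (s, x)).hasFDerivAt.comp x h1).fderiv

lemma inner_gradient {d : ℕ} (f : Ed d → ℝ) (x v : Ed d) :
    ⟪gradient f x, v⟫ = fderiv ℝ f x v := by
  simp [gradient]

lemma continuous_grad {d : ℕ} {φ : ℝ × Ed d → ℝ} (hφ : ContDiff ℝ 1 φ) :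
    Continuous fun p : ℝ × Sph d => gradient (fun x => φ (p.1, x)) (p.2 : Ed d) := by
  have hc : Continuous (fderiv ℝ φ) := hφ.continuous_fderiv (by norm_num)
  have : ∀ p : ℝ × Sph d, gradient (fun x => φ (p.1, x)) (p.2 : Ed d) =
      (InnerProductSpace.toDual ℝ (Ed d)).symm
        ((fderiv ℝ φ (cylEmb d p)).comp (ContinuousLinearMap.inr ℝ ℝ (Ed d))) := fun p => by
    rw [gradient, fderiv_slice hφ]; rfl
  simp only [this]
  refine (LinearIsometryEquiv.continuous _).comp ?_
  exact (hc.comp (continuous_cylEmb d)).clm_comp continuous_const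

lemma continuous_sgrad {d : ℕ} {φ : ℝ × Ed d → ℝ} (hφ : ContDiff ℝ 1 φ) :
    Continuous (sgrad d φ) := by
  have := continuous_grad hφ
  unfold sgrad
  fun_prop

lemma continuous_dS {d : ℕ} {φ : ℝ × Ed d → ℝ} (hφ : ContDiff ℝ 1 φ) :
    Continuous (dS d φ) := by
  have hc : Continuous (fderiv ℝ φ) := hφ.continuous_fderiv (by norm_num)
  rw [show dS d φ = fun p => fderiv ℝ φ (cylEmb d p) (1, 0) from funext (dS_eq hφ)]
  exact (hc.comp (continuous_cylEmb d)).clm_apply continuous_const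

lemma continuous_cylVal {d : ℕ} {φ : ℝ × Ed d → ℝ} (hφ : ContDiff ℝ 1 φ) :
    Continuous (cylVal d φ) := hφ.continuous.comp (continuous_cylEmb d)

/-- `C¹` functions of finite `H¹(𝒞)`-energy. -/
def HasEn (d : ℕ) (Λ : ℝ) (φ : ℝ × Ed d → ℝ) : Prop :=
  ContDiff ℝ 1 φ ∧
  Integrable (fun p => dS d φ p ^ 2 + ‖sgrad d φ p‖ ^ 2 + Λ * cylVal d φ p ^ 2) (cylMeasure d)

lemma HasEn.sq {d : ℕ} {Λ : ℝ} (hΛ : 0 < Λ) {φ : ℝ × Ed d → ℝ} (h : HasEn d Λ φ) :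
    Integrable (fun p => dS d φ p ^ 2) (cylMeasure d) ∧
    Integrable (fun p => ‖sgrad d φ p‖ ^ 2) (cylMeasure d) ∧
    Integrable (fun p => cylVal d φ p ^ 2) (cylMeasure d) := by
  have c1 := continuous_dS h.1
  have c2 := continuous_sgrad h.1
  have c3 := continuous_cylVal h.1
  refine ⟨h.2.mono' (by fun_prop : Continuous _).aestronglyMeasurable
      (Eventually.of_forall fun p => ?_),
    h.2.mono' (by fun_prop : Continuous _).aestronglyMeasurable
      (Eventually.of_forall fun p => ?_),
    (h.2.const_mul Λ⁻¹).mono' (by fun_prop : Continuous _).aestronglyMeasurable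
      (Eventually.of_forall fun p => ?_)⟩
  all_goals
    have i1 := sq_nonneg (dS d φ p)
    have i2 := sq_nonneg ‖sgrad d φ p‖
    have i3 := mul_nonneg hΛ.le (sq_nonneg (cylVal d φ p))
    rw [norm_eq_abs, abs_of_nonneg (by positivity)]
  · linarith
  · linarith
  · rw [inv_mul_eq_div, le_div_iff₀ hΛ]; linarith

lemma integrable_mul_of_sq {X : Type*} [TopologicalSpace X] [MeasurableSpace X]
    [OpensMeasurableSpace X] {ν : Measure X} {f g : X → ℝ} [SecondCountableTopology X]
    (hf : Continuous f) (hg : Continuous g) (hf2 : Integrable (fun x => f x ^ 2) ν)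
    (hg2 : Integrable (fun x => g x ^ 2) ν) : Integrable (fun x => f x * g x) ν := by
  refine (hf2.add hg2).mono' (by fun_prop : Continuous _).aestronglyMeasurable
    (Eventually.of_forall fun x => ?_)
  simp only [Pi.add_apply, norm_mul, norm_eq_abs]
  rw [← sq_abs (f x), ← sq_abs (g x)]
  nlinarith [sq_nonneg (|f x| - |g x|), sq_nonneg |f x|, sq_nonneg |g x|]

lemma integrable_inner_of_sq {d : ℕ} {ν : Measure (ℝ × Sph d)} {f g : ℝ × Sph d → Ed d}
    (hf : Continuous f) (hg : Continuous g) (hf2 : Integrable (fun x => ‖f x‖ ^ 2) ν)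
    (hg2 : Integrable (fun x => ‖g x‖ ^ 2) ν) : Integrable (fun x => ⟪f x, g x⟫) ν := by
  refine (hf2.add hg2).mono' (by fun_prop : Continuous _).aestronglyMeasurable
    (Eventually.of_forall fun x => ?_)
  simp only [Pi.add_apply, norm_eq_abs]
  have := abs_real_inner_le_norm (f x) (g x)
  nlinarith [sq_nonneg (‖f x‖ - ‖g x‖), sq_nonneg ‖f x‖, sq_nonneg ‖g x‖]

lemma HasEn.inner {d : ℕ} {Λ : ℝ} (hΛ : 0 < Λ) {φ ψ : ℝ × Ed d → ℝ} (h : HasEn d Λ φ)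
    (h' : HasEn d Λ ψ) :
    Integrable (fun p => dS d φ p * dS d ψ p) (cylMeasure d) ∧
    Integrable (fun p => ⟪sgrad d φ p, sgrad d ψ p⟫) (cylMeasure d) ∧
    Integrable (fun p => cylVal d φ p * cylVal d ψ p) (cylMeasure d) :=
  ⟨integrable_mul_of_sq (continuous_dS h.1) (continuous_dS h'.1) (h.sq hΛ).1 (h'.sq hΛ).1,
    integrable_inner_of_sq (continuous_sgrad h.1) (continuous_sgrad h'.1) (h.sq hΛ).2.1
      (h'.sq hΛ).2.1,
    integrable_mul_of_sq (continuous_cylVal h.1) (continuous_cylVal h'.1) (h.sq hΛ).2.2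
      (h'.sq hΛ).2.2⟩

lemma h1Inner_eq {d : ℕ} {Λ : ℝ} (hΛ : 0 < Λ) {φ ψ : ℝ × Ed d → ℝ} (h : HasEn d Λ φ)
    (h' : HasEn d Λ ψ) :
    h1Inner d Λ φ ψ = ∫ p, dS d φ p * dS d ψ p ∂cylMeasure d +
      ∫ p, ⟪sgrad d φ p, sgrad d ψ p⟫ ∂cylMeasure d +
      Λ * ∫ p, cylVal d φ p * cylVal d ψ p ∂cylMeasure d := by
  obtain ⟨i1, i2, i3⟩ := h.inner hΛ h'
  unfold h1Inner
  rw [← integral_const_mul, ← integral_add i1 i2, ← integral_add (i1.fun_add i2) (i3.const_mul _)]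
  refine integral_congr_ae (Eventually.of_forall fun p => ?_)
  ring

lemma h1NormSq_eq_inner {d : ℕ} {Λ : ℝ} (φ : ℝ × Ed d → ℝ) :
    h1NormSq d Λ φ = h1Inner d Λ φ φ := by
  unfold h1NormSq h1Inner
  refine integral_congr_ae (Eventually.of_forall fun p => ?_)
  simp only [real_inner_self_eq_norm_sq]
  ring

lemma gradient_add_mul {d : ℕ} {φ ψ : ℝ × Ed d → ℝ} (h : ContDiff ℝ 1 φ) (h' : ContDiff ℝ 1 ψ)
    (c s : ℝ) (x : Ed d) :
    gradient (fun x => φ (s, x) + c * ψ (s, x)) x =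
      gradient (fun x => φ (s, x)) x + c • gradient (fun x => ψ (s, x)) x := by
  have d1 := (contDiff_slice h s).differentiable (by norm_num) x
  have d2 := (contDiff_slice h' s).differentiable (by norm_num) x
  have : fderiv ℝ (fun x => φ (s, x) + c * ψ (s, x)) x =
      fderiv ℝ (fun x => φ (s, x)) x + c • fderiv ℝ (fun x => ψ (s, x)) x :=
    (d1.hasFDerivAt.add (d2.hasFDerivAt.const_mul c)).fderiv
  simp [gradient, this]

lemma sgrad_add_mul {d : ℕ} {φ ψ : ℝ × Ed d → ℝ} (h : ContDiff ℝ 1 φ) (h' : ContDiff ℝ 1 ψ)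
    (c : ℝ) (p : ℝ × Sph d) :
    sgrad d (fun z => φ z + c * ψ z) p = sgrad d φ p + c • sgrad d ψ p := by
  unfold sgrad
  rw [gradient_add_mul h h', inner_add_left, inner_smul_left]
  simp only [conj_trivial]
  module

lemma dS_add_mul {d : ℕ} {φ ψ : ℝ × Ed d → ℝ} (h : ContDiff ℝ 1 φ) (h' : ContDiff ℝ 1 ψ)
    (c : ℝ) (p : ℝ × Sph d) :
    dS d (fun z => φ z + c * ψ z) p = dS d φ p + c * dS d ψ p :=
  ((hasDerivAt_slice h p.1 p.2).add ((hasDerivAt_slice h' p.1 p.2).const_mul c)).deriv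

lemma energy_add_mul {d : ℕ} {Λ : ℝ} {φ ψ : ℝ × Ed d → ℝ} (h : ContDiff ℝ 1 φ)
    (h' : ContDiff ℝ 1 ψ) (c : ℝ) (p : ℝ × Sph d) :
    dS d (fun z => φ z + c * ψ z) p ^ 2 + ‖sgrad d (fun z => φ z + c * ψ z) p‖ ^ 2 +
      Λ * cylVal d (fun z => φ z + c * ψ z) p ^ 2 =
    (dS d φ p ^ 2 + ‖sgrad d φ p‖ ^ 2 + Λ * cylVal d φ p ^ 2) +
    (2 * c) * (dS d ψ p * dS d φ p + ⟪sgrad d ψ p, sgrad d φ p⟫ +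
      Λ * cylVal d ψ p * cylVal d φ p) +
    c ^ 2 * (dS d ψ p ^ 2 + ‖sgrad d ψ p‖ ^ 2 + Λ * cylVal d ψ p ^ 2) := by
  rw [dS_add_mul h h', sgrad_add_mul h h', norm_add_sq_real, inner_smul_right, norm_smul, mul_pow,
    norm_eq_abs, sq_abs, real_inner_comm]
  simp only [cylVal]
  ring

lemma HasEn.inner_integrable {d : ℕ} {Λ : ℝ} (hΛ : 0 < Λ) {φ ψ : ℝ × Ed d → ℝ} (h : HasEn d Λ φ)
    (h' : HasEn d Λ ψ) : Integrable (fun p => dS d φ p * dS d ψ p + ⟪sgrad d φ p, sgrad d ψ p⟫ +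
      Λ * cylVal d φ p * cylVal d ψ p) (cylMeasure d) := by
  obtain ⟨i1, i2, i3⟩ := h.inner hΛ h'
  refine ((i1.add i2).add (i3.const_mul Λ)).congr (Eventually.of_forall fun p => ?_)
  simp only [Pi.add_apply]
  ring

lemma HasEn.add_mul {d : ℕ} {Λ : ℝ} (hΛ : 0 < Λ) {φ ψ : ℝ × Ed d → ℝ} (h : HasEn d Λ φ)
    (h' : HasEn d Λ ψ) (c : ℝ) : HasEn d Λ (fun z => φ z + c * ψ z) := by
  refine ⟨h.1.add (contDiff_const.mul h'.1), ?_⟩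
  simp only [energy_add_mul h.1 h'.1]
  exact (h.2.add ((h'.inner_integrable hΛ h).const_mul _)).add (h'.2.const_mul _)

lemma h1NormSq_add_mul {d : ℕ} {Λ : ℝ} (hΛ : 0 < Λ) {φ ψ : ℝ × Ed d → ℝ} (h : HasEn d Λ φ)
    (h' : HasEn d Λ ψ) (c : ℝ) : h1NormSq d Λ (fun z => φ z + c * ψ z) =
      h1NormSq d Λ φ + 2 * c * h1Inner d Λ ψ φ + c ^ 2 * h1NormSq d Λ ψ := by
  have i1 := h.2
  have i2 := (h'.inner_integrable hΛ h).const_mul (2 * c)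
  have i3 := h'.2.const_mul (c ^ 2)
  unfold h1NormSq h1Inner
  simp only [energy_add_mul h.1 h'.1]
  rw [← integral_const_mul, ← integral_const_mul, ← integral_add i1 i2, ← integral_add (i1.fun_add i2) i3]

/-! ### Axial profiles and their weak equations -/

/-- A `C²` axial profile `g` with derivatives `g'`, `g''`, all square integrable. -/
structure Profile (g g' g'' : ℝ → ℝ) : Prop where
  d1 : ∀ s, HasDerivAt g (g' s) s
  d2 : ∀ s, HasDerivAt g' (g'' s) s
  c2 : Continuous g''
  i0 : Integrable fun s => g s ^ 2
  i1 : Integrable fun s => g' s ^ 2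
  i2 : Integrable fun s => g'' s ^ 2

namespace Profile

variable {g g' g'' : ℝ → ℝ}

lemma c0 (h : Profile g g' g'') : Continuous g :=
  continuous_iff_continuousAt.2 fun s => (h.d1 s).continuousAt

lemma c1 (h : Profile g g' g'') : Continuous g' :=
  continuous_iff_continuousAt.2 fun s => (h.d2 s).continuousAt

lemma contDiff (h : Profile g g' g'') : ContDiff ℝ 1 g := by
  rw [contDiff_one_iff_deriv]
  exact ⟨fun s => (h.d1 s).differentiableAt, by
    rw [show deriv g = g' from funext fun s => (h.d1 s).deriv]; exact h.c1⟩

lemma contDiff_mul (h : Profile g g' g'') {d : ℕ} {k : Ed d → ℝ} (hk : ContDiff ℝ 1 k) :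
    ContDiff ℝ 1 fun z : ℝ × Ed d => g z.1 * k z.2 :=
  (h.contDiff.comp contDiff_fst).mul (hk.comp contDiff_snd)

lemma dS_mul (h : Profile g g' g'') {d : ℕ} (k : Ed d → ℝ) (p : ℝ × Sph d) :
    dS d (fun z => g z.1 * k z.2) p = g' p.1 * k p.2 :=
  ((h.d1 p.1).mul_const (k p.2)).deriv

end Profile

lemma gradient_const_mul {d : ℕ} {k : Ed d → ℝ} (hk : ContDiff ℝ 1 k) (c : ℝ) (x : Ed d) :
    gradient (fun x => c * k x) x = c • gradient k x := by
  have : fderiv ℝ (fun x => c * k x) x = c • fderiv ℝ k x :=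
    ((hk.differentiable (by norm_num) x).hasFDerivAt.const_mul c).fderiv
  simp [gradient, this]

lemma sgrad_mul {d : ℕ} (g : ℝ → ℝ) {k : Ed d → ℝ} (hk : ContDiff ℝ 1 k) (p : ℝ × Sph d) :
    sgrad d (fun z => g z.1 * k z.2) p = g p.1 • sgrad d (fun z => k z.2) (0, p.2) := by
  unfold sgrad
  simp only [gradient_const_mul hk, inner_smul_left, conj_trivial]
  module

lemma integrable_mul_cyl {d : ℕ} {g : ℝ → ℝ} {k : Sph d → ℝ} (hg : Integrable g)
    (hk : Continuous k) : Integrable (fun p : ℝ × Sph d => g p.1 * k p.2) (cylMeasure d) :=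
  hg.mul_prod (integrable_sph hk)

lemma Profile.hasEn {g g' g'' : ℝ → ℝ} (h : Profile g g' g'') {d : ℕ} {k : Ed d → ℝ}
    (hk : ContDiff ℝ 1 k) (Λ : ℝ) : HasEn d Λ fun z => g z.1 * k z.2 := by
  refine ⟨h.contDiff_mul hk, ?_⟩
  have hk' : ContDiff ℝ 1 fun z : ℝ × Ed d => k z.2 := hk.comp contDiff_snd
  have c1 : Continuous fun ω : Sph d => k ω := hk.continuous.comp continuous_subtype_val
  have c2 : Continuous fun ω : Sph d => sgrad d (fun z => k z.2) (0, ω) :=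
    (continuous_sgrad hk').comp (by fun_prop)
  have j1 := integrable_mul_cyl h.i1 (c1.pow 2)
  have j2 := integrable_mul_cyl h.i0 (c2.norm.pow 2)
  have j3 := (integrable_mul_cyl h.i0 (c1.pow 2)).const_mul Λ
  refine ((j1.add j2).add j3).congr (Eventually.of_forall fun p => ?_)
  simp only [Pi.add_apply, Pi.pow_apply, h.dS_mul, sgrad_mul g hk, norm_smul, cylVal, mul_pow, norm_eq_abs,
    sq_abs]

/-- Axial integration by parts on the cylinder. -/
lemma Profile.axial_ibp {g g' g'' : ℝ → ℝ} (h : Profile g g' g'') {d : ℕ} {k : Ed d → ℝ}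
    (hk : ContDiff ℝ 1 k) {Λ : ℝ} (hΛ : 0 < Λ) {φ : ℝ × Ed d → ℝ} (hφ : HasEn d Λ φ) :
    ∫ p, dS d φ p * dS d (fun z => g z.1 * k z.2) p ∂cylMeasure d =
      - ∫ p, cylVal d φ p * (g'' p.1 * k p.2) ∂cylMeasure d := by
  have c1 : Continuous fun ω : Sph d => k ω := hk.continuous.comp continuous_subtype_val
  have cg1 := h.c1
  have cg2 := h.c2
  obtain ⟨s1, -, s3⟩ := hφ.sq hΛ
  have q1 : Integrable (fun p : ℝ × Sph d => (g' p.1 * k p.2) ^ 2) (cylMeasure d) := by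
    simp only [mul_pow]; exact integrable_mul_cyl h.i1 (c1.pow 2)
  have q2 : Integrable (fun p : ℝ × Sph d => (g'' p.1 * k p.2) ^ 2) (cylMeasure d) := by
    simp only [mul_pow]; exact integrable_mul_cyl h.i2 (c1.pow 2)
  have I1 : Integrable (fun p : ℝ × Sph d => dS d φ p * (g' p.1 * k p.2)) (cylMeasure d) :=
    integrable_mul_of_sq (continuous_dS hφ.1) (by fun_prop) s1 q1
  have I2 : Integrable (fun p : ℝ × Sph d => cylVal d φ p * (g'' p.1 * k p.2)) (cylMeasure d) :=
    integrable_mul_of_sq (continuous_cylVal hφ.1) (by fun_prop) s3 q2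
  have I3 : Integrable (fun p : ℝ × Sph d => cylVal d φ p * (g' p.1 * k p.2)) (cylMeasure d) :=
    integrable_mul_of_sq (continuous_cylVal hφ.1) (by fun_prop) s3 q1
  simp only [h.dS_mul]
  unfold cylMeasure at *
  rw [integral_prod_symm _ I1, integral_prod_symm _ I2, ← integral_neg]
  refine integral_congr_ae ?_
  filter_upwards [I1.prod_left_ae, I2.prod_left_ae, I3.prod_left_ae] with ω a1 a2 a3
  have := integral_mul_deriv_eq_deriv_mul_of_integrable
    (u := fun s => φ (s, (ω : Ed d))) (u' := fun s => dS d φ (s, ω))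
    (v := fun s => g' s * k ω) (v' := fun s => g'' s * k ω)
    (fun s _ => hasDerivAt_slice hφ.1 s ω) (fun s _ => (h.d2 s).mul_const _) a2 a1 a3
  simp only [cylVal]
  rw [this, neg_neg]

lemma sgrad_inner_coord {d : ℕ} (l : Fin d) (g : ℝ → ℝ) {φ : ℝ × Ed d → ℝ} (p : ℝ × Sph d) :
    ⟪sgrad d φ p, sgrad d (fun z => g z.1 * z.2 l) p⟫ =
      g p.1 * (fderiv ℝ (fun x => φ (p.1, x)) p.2 (bvec d l) -
        (p.2 : Ed d) l * fderiv ℝ (fun x => φ (p.1, x)) p.2 p.2) := by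
  have hk : ContDiff ℝ 1 fun x : Ed d => x l := by fun_prop
  have hgrad : gradient (fun x : Ed d => x l) (p.2 : Ed d) = bvec d l := by
    have h1 : HasFDerivAt (fun x : Ed d => x l) (EuclideanSpace.proj l : Ed d →L[ℝ] ℝ)
        (p.2 : Ed d) := (EuclideanSpace.proj l : Ed d →L[ℝ] ℝ).hasFDerivAt
    refine ext_inner_right ℝ fun v => ?_
    rw [inner_gradient, h1.fderiv, EuclideanSpace.inner_single_left]
    simp
  rw [sgrad_mul g hk]
  unfold sgrad
  simp only [hgrad]
  rw [← inner_gradient, ← inner_gradient]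
  set G := gradient (fun x => φ (p.1, x)) (p.2 : Ed d)
  have hn : ⟪(p.2 : Ed d), (p.2 : Ed d)⟫ = 1 := by
    rw [real_inner_self_eq_norm_sq]; simp
  have hb : ⟪bvec d l, (p.2 : Ed d)⟫ = (p.2 : Ed d) l := by
    rw [EuclideanSpace.inner_single_left]; simp
  simp only [inner_smul_right, inner_smul_left, inner_sub_left, inner_sub_right, conj_trivial, hn,
    hb, real_inner_comm (bvec d l) (p.2 : Ed d)]
  ring

/-- Angular integration by parts on the cylinder. -/
lemma Profile.angular_ibp {g g' g'' : ℝ → ℝ} (h : Profile g g' g'') {d : ℕ} (l : Fin d)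
    {Λ : ℝ} (hΛ : 0 < Λ) {φ : ℝ × Ed d → ℝ} (hφ : HasEn d Λ φ) :
    ∫ p, ⟪sgrad d φ p, sgrad d (fun z => g z.1 * z.2 l) p⟫ ∂cylMeasure d =
      ((d : ℝ) - 1) * ∫ p, cylVal d φ p * (g p.1 * (p.2 : Ed d) l) ∂cylMeasure d := by
  have hk : ContDiff ℝ 1 fun x : Ed d => x l := by fun_prop
  have I1 := (hφ.inner hΛ (h.hasEn hk Λ)).2.1
  have I2 := (hφ.inner hΛ (h.hasEn hk Λ)).2.2
  simp only [sgrad_inner_coord] at I1 ⊢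
  simp only [show ∀ p : ℝ × Sph d, cylVal d (fun z => g z.1 * z.2 l) p = g p.1 * (p.2 : Ed d) l
    from fun _ => rfl] at I2
  unfold cylMeasure at *
  rw [integral_prod _ I1, integral_prod _ I2, ← integral_const_mul]
  refine integral_congr_ae (Eventually.of_forall fun s => ?_)
  simp only
  rw [integral_const_mul, sph_ibp d l (contDiff_slice hφ.1 s), mul_left_comm, ← integral_const_mul]
  congr 1
  refine integral_congr_ae (Eventually.of_forall fun ω => ?_)
  simp only [cylVal]
  ring

/-- Weak form of `-g'' + Λ g` for an axial profile. -/
lemma Profile.weak_radial {g g' g'' : ℝ → ℝ} (h : Profile g g' g'') {d : ℕ}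
    {Λ : ℝ} (hΛ : 0 < Λ) {φ : ℝ × Ed d → ℝ} (hφ : HasEn d Λ φ) :
    h1Inner d Λ φ (fun z => g z.1) =
      ∫ p, cylVal d φ p * (Λ * g p.1 - g'' p.1) ∂cylMeasure d := by
  have hk : ContDiff ℝ 1 fun _ : Ed d => (1 : ℝ) := contDiff_const
  have hE := h.hasEn hk Λ
  have hA := h.axial_ibp hk hΛ hφ
  have hI := hφ.inner hΛ hE
  have hin := h1Inner_eq hΛ hφ hE
  have c2 := h.c2
  have q2 : Integrable (fun p : ℝ × Sph d => cylVal d φ p * (g'' p.1 * 1)) (cylMeasure d) := by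
    refine integrable_mul_of_sq (continuous_cylVal hφ.1) (by fun_prop) (hφ.sq hΛ).2.2 ?_
    simpa using integrable_mul_cyl h.i2 (continuous_const (y := (1 : ℝ)))
  have hs : ∀ p : ℝ × Sph d, sgrad d (fun z => g z.1 * 1) p = 0 := fun p => by
    rw [sgrad_mul g hk]; simp [sgrad, gradient_fun_const]
  rw [hA] at hin
  simp only [hs, inner_zero_right, integral_zero] at hin
  simp only [mul_one] at hin
  rw [hin, ← integral_neg, add_zero, ← integral_const_mul, ← integral_add]
  · refine integral_congr_ae (Eventually.of_forall fun p => ?_)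
    simp only [cylVal]
    ring
  · simpa using q2.neg
  · simpa using hI.2.2.const_mul Λ

/-- Weak form of `-g'' + (d - 1) g + Λ g` for a profile times a coordinate. -/
lemma Profile.weak_coord {g g' g'' : ℝ → ℝ} (h : Profile g g' g'') {d : ℕ} (l : Fin d)
    {Λ : ℝ} (hΛ : 0 < Λ) {φ : ℝ × Ed d → ℝ} (hφ : HasEn d Λ φ) :
    h1Inner d Λ φ (fun z => g z.1 * z.2 l) =
      ∫ p, cylVal d φ p * ((((d : ℝ) - 1 + Λ) * g p.1 - g'' p.1) * (p.2 : Ed d) l)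
        ∂cylMeasure d := by
  have hk : ContDiff ℝ 1 fun x : Ed d => x l := by fun_prop
  have hE := h.hasEn hk Λ
  have hI : Integrable (fun p : ℝ × Sph d => cylVal d φ p * (g p.1 * (p.2 : Ed d) l))
    (cylMeasure d) := (hφ.inner hΛ hE).2.2
  have c2 := h.c2
  have q2 : Integrable (fun p : ℝ × Sph d => cylVal d φ p * (g'' p.1 * (p.2 : Ed d) l))
      (cylMeasure d) := by
    refine integrable_mul_of_sq (continuous_cylVal hφ.1) (by fun_prop) (hφ.sq hΛ).2.2 ?_
    simp only [mul_pow]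
    exact integrable_mul_cyl h.i2 (by fun_prop : Continuous fun ω : Sph d => (ω : Ed d) l ^ 2)
  rw [h1Inner_eq hΛ hφ hE, h.axial_ibp hk hΛ hφ, h.angular_ibp l hΛ hφ]
  simp only [show ∀ p : ℝ × Sph d, cylVal d (fun z => g z.1 * z.2 l) p = g p.1 * (p.2 : Ed d) l
    from fun _ => rfl]
  rw [← integral_neg, ← integral_const_mul, ← integral_const_mul,
    ← integral_add q2.fun_neg (hI.const_mul _), ← integral_add (q2.fun_neg.fun_add (hI.const_mul _))
      (hI.const_mul _)]
  refine integral_congr_ae (Eventually.of_forall fun p => ?_)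
  ring

/-! ### Powers of the hyperbolic secant -/

/-- The function `s ↦ cosh(αs)^{-k}`; the profiles `u` and `u^{q/2}` are multiples of it. -/
noncomputable def sechP (α k s : ℝ) : ℝ := Real.cosh (α * s) ^ (-k)

lemma sechP_pos (α k s : ℝ) : 0 < sechP α k s := rpow_pos_of_pos (cosh_pos _) _

lemma sechP_le (α s : ℝ) {k l : ℝ} (h : k ≤ l) : sechP α l s ≤ sechP α k s :=
  rpow_le_rpow_of_exponent_le (one_le_cosh _) (by linarith)

lemma sechP_le_one (α s : ℝ) {k : ℝ} (h : 0 ≤ k) : sechP α k s ≤ 1 := by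
  simpa [sechP] using sechP_le α s h

lemma sechP_rpow (α k p s : ℝ) : sechP α k s ^ p = sechP α (k * p) s := by
  unfold sechP
  rw [← rpow_mul (cosh_pos _).le, neg_mul]

lemma sechP_mul (α k l s : ℝ) : sechP α k s * sechP α l s = sechP α (k + l) s := by
  unfold sechP
  rw [← rpow_add (cosh_pos _), neg_add]

lemma sechP_sq (α k s : ℝ) : sechP α k s ^ 2 = sechP α (2 * k) s := by
  rw [sq, sechP_mul, two_mul]

lemma continuous_sechP (α k : ℝ) : Continuous (sechP α k) := by
  unfold sechP
  exact (by fun_prop : Continuous fun s => Real.cosh (α * s)).rpow_const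
    fun s => Or.inl (cosh_pos _).ne'

lemma integrable_sechP {α k : ℝ} (hα : 0 < α) (hk : 0 < k) : Integrable (sechP α k) := by
  have key : ∀ x y : ℝ, Real.exp x / 2 ≤ Real.cosh (α * y) →
      sechP α k y ≤ 2 ^ k * Real.exp (-k * x) := fun x y h => by
    have h1 := rpow_le_rpow_of_nonpos (by positivity) h (neg_nonpos.2 hk.le)
    rw [div_rpow (exp_pos _).le (by norm_num), ← exp_mul, rpow_neg (by norm_num : (0:ℝ) ≤ 2),
      div_inv_eq_mul] at h1
    calc _ ≤ _ := h1
      _ = _ := by rw [mul_comm]; congr 2; ring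
  rw [← integrableOn_univ, ← Iic_union_Ioi (a := (0 : ℝ))]
  refine IntegrableOn.union ?_ ?_
  · refine ((integrableOn_exp_mul_Iic (mul_pos hk hα) 0).const_mul (2 ^ k)).mono'
      (continuous_sechP α k).aestronglyMeasurable (Eventually.of_forall fun s => ?_)
    rw [norm_eq_abs, abs_of_pos (sechP_pos _ _ _)]
    refine (key (-(α * s)) s ?_).trans_eq (by congr 2; ring)
    rw [cosh_eq]; linarith [exp_pos (α * s)]
  · refine ((integrableOn_exp_mul_Ioi (neg_lt_zero.2 (mul_pos hk hα)) 0).const_mul (2 ^ k)).mono'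
      (continuous_sechP α k).aestronglyMeasurable (Eventually.of_forall fun s => ?_)
    rw [norm_eq_abs, abs_of_pos (sechP_pos _ _ _)]
    refine (key (α * s) s ?_).trans_eq (by congr 2; ring)
    rw [cosh_eq]; linarith [exp_pos (-(α * s))]

lemma hasDerivAt_sechP (α k s : ℝ) :
    HasDerivAt (sechP α k) (-(k * α) * (Real.sinh (α * s) * sechP α (k + 1) s)) s := by
  have h0 : HasDerivAt (fun s => α * s) α s := by simpa using (hasDerivAt_id s).const_mul α
  have h := (h0.cosh).rpow_const (p := -k) (Or.inl (cosh_pos (α * s)).ne')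
  unfold sechP
  convert h using 1
  rw [show -(k + 1) = -k - 1 by ring]
  ring

lemma hasDerivAt_sechP' (α k s : ℝ) :
    HasDerivAt (fun s => -(k * α) * (Real.sinh (α * s) * sechP α (k + 1) s))
      (α ^ 2 * (k ^ 2 * sechP α k s - k * (k + 1) * sechP α (k + 2) s)) s := by
  have h0 : HasDerivAt (fun s => α * s) α s := by simpa using (hasDerivAt_id s).const_mul α
  have h := ((h0.sinh).mul (hasDerivAt_sechP α (k + 1) s)).const_mul (-(k * α))
  refine h.congr_deriv ?_
  have hc := cosh_pos (α * s)
  have e1 : sechP α (k + 1) s = Real.cosh (α * s) * sechP α (k + 2) s := by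
    unfold sechP
    rw [show -(k + 1) = 1 + -(k + 2) by ring, rpow_add hc, rpow_one]
  have e2 : sechP α k s = Real.cosh (α * s) ^ 2 * sechP α (k + 2) s := by
    unfold sechP
    rw [show -k = 2 + -(k + 2) by ring, rpow_add hc, rpow_two]
  rw [show k + 1 + 1 = k + 2 by ring, e1, e2]
  have := cosh_sq (α * s)
  linear_combination (-(k * α ^ 2 * (k + 1) * sechP α (k + 2) s)) * this

lemma profile_sechP {α k : ℝ} (hα : 0 < α) (hk : 0 < k) (B : ℝ) :
    Profile (fun s => B * sechP α k s)
      (fun s => B * (-(k * α) * (Real.sinh (α * s) * sechP α (k + 1) s)))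
      (fun s => B * (α ^ 2 * (k ^ 2 * sechP α k s - k * (k + 1) * sechP α (k + 2) s))) := by
  have c0 := continuous_sechP α k
  have c1 := continuous_sechP α (k + 1)
  have c2 := continuous_sechP α (k + 2)
  have hi : Integrable fun s => sechP α k s ^ 2 := by
    simp only [sechP_sq]; exact integrable_sechP hα (by positivity)
  have dom : ∀ (f : ℝ → ℝ) (K : ℝ), Continuous f → (∀ s, |f s| ≤ K * sechP α k s) →
      Integrable fun s => f s ^ 2 := fun f K hf h => by
    refine (hi.const_mul (K ^ 2)).mono' (by fun_prop : Continuous _).aestronglyMeasurable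
      (Eventually.of_forall fun s => ?_)
    rw [norm_eq_abs, abs_of_nonneg (sq_nonneg _), ← sq_abs, ← mul_pow]
    exact pow_le_pow_left₀ (abs_nonneg _) (h s) 2
  refine ⟨fun s => (hasDerivAt_sechP α k s).const_mul B,
    fun s => (hasDerivAt_sechP' α k s).const_mul B, by fun_prop,
    dom _ |B| (by fun_prop) fun s => ?_, dom _ (|B| * (k * α)) (by fun_prop) fun s => ?_,
    dom _ (|B| * (α ^ 2 * (k ^ 2 + k * (k + 1)))) (by fun_prop) fun s => ?_⟩
  · rw [abs_mul, abs_of_pos (sechP_pos _ _ _)]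
  · have hs : |Real.sinh (α * s)| ≤ Real.cosh (α * s) := by
      rw [abs_sinh, ← cosh_abs]; exact (sinh_lt_cosh _).le
    have e1 : sechP α k s = Real.cosh (α * s) * sechP α (k + 1) s := by
      unfold sechP
      rw [show -k = 1 + -(k + 1) by ring, rpow_add (cosh_pos _), rpow_one]
    rw [abs_mul, abs_mul, abs_mul, abs_neg, abs_of_pos (mul_pos hk hα),
      abs_of_pos (sechP_pos _ _ _), e1, mul_assoc |B|]
    gcongr
    exact (sechP_pos _ _ _).le
  · rw [abs_mul, abs_mul, abs_of_pos (pow_pos hα 2), mul_assoc |B|, mul_assoc (α ^ 2)]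
    gcongr
    refine (abs_sub _ _).trans ?_
    have := sechP_le α s (show k ≤ k + 2 by linarith)
    rw [abs_of_pos (by have := sechP_pos α k s; positivity),
      abs_of_pos (by have := sechP_pos α (k + 2) s; positivity)]
    nlinarith [mul_pos hk (by linarith : 0 < k + 1)]

/-! ### The profile `u` -/

section U

variable {q Λ : ℝ}

lemma alphaV_pos (hq : 2 < q) (hΛ : 0 < Λ) : 0 < alphaV q Λ :=
  mul_pos (by linarith) (Real.sqrt_pos.2 hΛ)

lemma alphaV_sq (hΛ : 0 < Λ) : alphaV q Λ ^ 2 = (q - 2) ^ 2 / 4 * Λ := by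
  unfold alphaV
  rw [mul_pow, Real.sq_sqrt hΛ.le]; ring

lemma betaV_pos (hq : 2 < q) (hΛ : 0 < Λ) : 0 < betaV q Λ :=
  rpow_pos_of_pos (by have : 0 < q := by linarith
                      positivity) _

lemma betaV_rpow (hq : 2 < q) (hΛ : 0 < Λ) : betaV q Λ ^ (q - 2) = q * Λ / 2 := by
  unfold betaV
  have : 0 < q := by linarith
  rw [← rpow_mul (by positivity), one_div, inv_mul_cancel₀ (by linarith), rpow_one]

lemma Ufun_eq (s : ℝ) : Ufun q Λ s = betaV q Λ * sechP (alphaV q Λ) (2 / (q - 2)) s := rfl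

lemma Ufun_pos (hq : 2 < q) (hΛ : 0 < Λ) (s : ℝ) : 0 < Ufun q Λ s :=
  mul_pos (betaV_pos hq hΛ) (sechP_pos _ _ _)

lemma Ufun_le (hq : 2 < q) (hΛ : 0 < Λ) (s : ℝ) : Ufun q Λ s ≤ betaV q Λ := by
  have h1 : 0 ≤ 2 / (q - 2) := div_nonneg (by norm_num) (by linarith)
  exact mul_le_of_le_one_right (betaV_pos hq hΛ).le (sechP_le_one _ _ h1)

lemma Ufun_rpow (hq : 2 < q) (hΛ : 0 < Λ) (p s : ℝ) :
    Ufun q Λ s ^ p = betaV q Λ ^ p * sechP (alphaV q Λ) (2 / (q - 2) * p) s := by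
  rw [Ufun_eq, mul_rpow (betaV_pos hq hΛ).le (sechP_pos _ _ _).le, sechP_rpow]

lemma continuous_Ufun (q Λ : ℝ) : Continuous (Ufun q Λ) :=
  continuous_const.mul (continuous_sechP _ _)

lemma continuous_Ufun_rpow (hq : 2 < q) (hΛ : 0 < Λ) (p : ℝ) :
    Continuous fun s => Ufun q Λ s ^ p :=
  (continuous_Ufun q Λ).rpow_const fun s => Or.inl (Ufun_pos hq hΛ s).ne'

lemma integrable_Ufun_rpow (hq : 2 < q) (hΛ : 0 < Λ) {p : ℝ} (hp : 0 < p) :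
    Integrable fun s => Ufun q Λ s ^ p := by
  simp only [Ufun_rpow hq hΛ]
  have : 0 < q - 2 := by linarith
  exact (integrable_sechP (alphaV_pos hq hΛ) (by positivity)).const_mul _

/-- `u` solves `-u'' + Λu = u^{q-1}`. -/
lemma profile_U (hq : 2 < q) (hΛ : 0 < Λ) :
    ∃ g', Profile (Ufun q Λ) g' (fun s => Λ * Ufun q Λ s - Ufun q Λ s ^ (q - 1)) := by
  have hq2 : 0 < q - 2 := by linarith
  have h := profile_sechP (alphaV_pos hq hΛ) (div_pos two_pos hq2) (betaV q Λ)
  suffices e : (fun s => Λ * Ufun q Λ s - Ufun q Λ s ^ (q - 1)) = _ from e ▸ ⟨_, h⟩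
  funext s
  rw [Ufun_rpow hq hΛ, Ufun_eq, alphaV_sq hΛ, show q - 1 = (q - 2) + 1 by ring,
    rpow_add (betaV_pos hq hΛ), betaV_rpow hq hΛ, rpow_one,
    show 2 / (q - 2) * (q - 2 + 1) = 2 / (q - 2) + 2 by field_simp; ring]
  field_simp
  ring

/-- `g = u^{q/2}` solves `-g'' + (q²/4)Λ g = (q-1) u^{q-2} g`. -/
lemma profile_W (hq : 2 < q) (hΛ : 0 < Λ) :
    ∃ g', Profile (fun s => Ufun q Λ s ^ (q / 2)) g' (fun s => q ^ 2 / 4 * Λ * Ufun q Λ s ^ (q / 2) -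
      (q - 1) * (Ufun q Λ s ^ (q - 2) * Ufun q Λ s ^ (q / 2))) := by
  have hq2 : 0 < q - 2 := by linarith
  have hq0 : 0 < q := by linarith
  have h := profile_sechP (alphaV_pos hq hΛ) (div_pos hq0 hq2) (betaV q Λ ^ (q / 2))
  have e : ∀ s, Ufun q Λ s ^ (q / 2) =
      betaV q Λ ^ (q / 2) * sechP (alphaV q Λ) (q / (q - 2)) s := fun s => by
    rw [Ufun_rpow hq hΛ]; congr 2; field_simp
  rw [funext e]
  suffices e' : (fun s => q ^ 2 / 4 * Λ * Ufun q Λ s ^ (q / 2) -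
      (q - 1) * (Ufun q Λ s ^ (q - 2) * Ufun q Λ s ^ (q / 2))) = _ from e' ▸ ⟨_, h⟩
  · funext s
    rw [e, Ufun_rpow hq hΛ (q - 2), alphaV_sq hΛ, betaV_rpow hq hΛ]
    rw [show 2 / (q - 2) * (q - 2) = 2 by field_simp,
      show q / (q - 2) + 2 = 2 + q / (q - 2) by ring, ← sechP_mul]
    field_simp
    ring

end U

lemma coordLast_eq {d : ℕ} (hd : 2 ≤ d) (x : Ed d) : coordLast d x = x ⟨d - 1, by lia⟩ := by
  simp [coordLast, show 0 < d by lia]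

lemma continuous_coordLast (d : ℕ) : Continuous (coordLast d) := by
  unfold coordLast
  split_ifs <;> fun_prop

lemma abs_coordLast_le {d : ℕ} (hd : 2 ≤ d) (ω : Sph d) : |coordLast d (ω : Ed d)| ≤ 1 := by
  rw [coordLast_eq hd]
  have := PiLp.norm_apply_le (ω : Ed d) ⟨d - 1, by lia⟩
  simpa using this

/-! ### Invariance under translations and rotations -/

/-- A function vanishing on the unit sphere has vanishing tangential derivatives there: test it
along the great circle `θ ↦ cos θ ω + sin θ τ`. -/
lemma fderiv_tangent_zero {d : ℕ} {h : Ed d → ℝ} (ω : Sph d) (hd : DifferentiableAt ℝ h (ω : Ed d))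
    (h0 : ∀ ω : Sph d, h ω = 0) {τ : Ed d} (hτ : ⟪(ω : Ed d), τ⟫ = 0) :
    fderiv ℝ h ω τ = 0 := by
  have unit : ∀ τ : Ed d, ⟪(ω : Ed d), τ⟫ = 0 → ‖τ‖ = 1 → fderiv ℝ h ω τ = 0 := by
    intro τ hτ hn
    have hω : ‖(ω : Ed d)‖ = 1 := by simp
    have hc : HasDerivAt (fun θ : ℝ => Real.cos θ • (ω : Ed d) + Real.sin θ • τ) τ 0 := by
      have := ((hasDerivAt_cos 0).smul_const (ω : Ed d)).add ((hasDerivAt_sin 0).smul_const τ)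
      have e : -Real.sin 0 • (ω : Ed d) + Real.cos 0 • τ = τ := by simp
      rw [e] at this
      exact this
    have hd' : HasFDerivAt h (fderiv ℝ h ω)
        ((fun θ : ℝ => Real.cos θ • (ω : Ed d) + Real.sin θ • τ) 0) := by
      simpa using hd.hasFDerivAt
    have hcomp := hd'.comp_hasDerivAt (0 : ℝ) hc
    have hz : h ∘ (fun θ : ℝ => Real.cos θ • (ω : Ed d) + Real.sin θ • τ) = fun _ => 0 := by
      funext θ
      have hn' : ‖Real.cos θ • (ω : Ed d) + Real.sin θ • τ‖ ^ 2 = 1 := by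
        rw [norm_add_sq_real, inner_smul_left, inner_smul_right, hτ, norm_smul, norm_smul, hω, hn]
        simp [Real.cos_sq_add_sin_sq]
      have hn2 : ‖Real.cos θ • (ω : Ed d) + Real.sin θ • τ‖ = 1 := by
        rwa [pow_eq_one_iff_of_nonneg (norm_nonneg _) two_ne_zero] at hn'
      exact h0 ⟨_, by simpa using hn2⟩
    rw [hz] at hcomp
    exact hcomp.unique (hasDerivAt_const (0 : ℝ) (0 : ℝ))
  rcases eq_or_ne τ 0 with rfl | hne
  · simp
  · have hn : ‖τ‖ ≠ 0 := norm_ne_zero_iff.2 hne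
    have := unit (‖τ‖⁻¹ • τ) (by rw [inner_smul_right, hτ, mul_zero])
      (by rw [norm_smul, norm_inv, norm_norm, inv_mul_cancel₀ hn])
    rw [map_smul, smul_eq_mul] at this
    exact (mul_eq_zero.1 this).resolve_left (inv_ne_zero hn)

section Transport

variable {d : ℕ} {φ ψ : ℝ × Ed d → ℝ} {c t : ℝ} {D : Ed d ≃ₗᵢ[ℝ] Ed d}

/-- The tangential gradient depends only on the values on the cylinder, and is equivariant. -/
lemma sgrad_transport (hφ : ContDiff ℝ 1 φ) (hψ : ContDiff ℝ 1 ψ)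
    (h : ∀ (s : ℝ) (ω : Sph d), φ (s, (ω : Ed d)) = c * ψ (s - t, D (ω : Ed d)))
    (s : ℝ) (ω : Sph d) :
    sgrad d φ (s, ω) = c • D.symm (sgrad d ψ (s - t, sphMap d D ω)) := by
  have df := (contDiff_slice hφ s).differentiable (by norm_num)
  have dg := (contDiff_slice hψ (s - t)).differentiable (by norm_num)
  have hH : HasFDerivAt (fun x => φ (s, x) - c * ψ (s - t, D x))
      (fderiv ℝ (fun x => φ (s, x)) ω - c • (fderiv ℝ (fun x => ψ (s - t, x)) (D ω)).comp
        (D : Ed d →L[ℝ] Ed d)) (ω : Ed d) := by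
    have h2 : HasFDerivAt (fun x => ψ (s - t, D x)) ((fderiv ℝ (fun x => ψ (s - t, x)) (D ω)).comp
        (D : Ed d →L[ℝ] Ed d)) (ω : Ed d) :=
      (dg (D ω)).hasFDerivAt.comp (ω : Ed d) (D : Ed d →L[ℝ] Ed d).hasFDerivAt
    exact (df ω).hasFDerivAt.sub (h2.const_mul c)
  have hω : ⟪(ω : Ed d), (ω : Ed d)⟫ = 1 := by rw [real_inner_self_eq_norm_sq]; simp
  have key : ∀ τ : Ed d, ⟪(ω : Ed d), τ⟫ = 0 → fderiv ℝ (fun x => φ (s, x)) ω τ =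
      c * fderiv ℝ (fun x => ψ (s - t, x)) (D ω) (D τ) := fun τ hτ => by
    have := fderiv_tangent_zero ω hH.differentiableAt (fun ω => by simp [h s ω]) hτ
    rw [hH.fderiv] at this
    simpa [sub_eq_zero] using this
  refine ext_inner_right ℝ fun v => ?_
  have hk := key (v - ⟪(ω : Ed d), v⟫ • (ω : Ed d)) (by
    rw [inner_sub_right, inner_smul_right, hω]; ring)
  have e2 : ⟪D.symm (sgrad d ψ (s - t, sphMap d D ω)), v⟫ =
      ⟪sgrad d ψ (s - t, sphMap d D ω), D v⟫ := by
    rw [← D.inner_map_map, D.apply_symm_apply]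
  rw [inner_smul_left, e2]
  unfold sgrad
  simp only [inner_sub_left, inner_smul_left, inner_gradient, conj_trivial]
  simp only [map_sub, map_smul, smul_eq_mul] at hk
  have e3 : ((sphMap d D ω : Sph d) : Ed d) = D ω := rfl
  rw [e3, D.inner_map_map]
  linear_combination hk

lemma dS_transport (hψ : ContDiff ℝ 1 ψ)
    (h : ∀ (s : ℝ) (ω : Sph d), φ (s, (ω : Ed d)) = c * ψ (s - t, D (ω : Ed d)))
    (s : ℝ) (ω : Sph d) : dS d φ (s, ω) = c * dS d ψ (s - t, sphMap d D ω) := by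
  have h1 := (hasDerivAt_slice hψ (s - t) (sphMap d D ω)).comp_sub_const s t
  have h2 := (h1.const_mul c).deriv
  rw [← h2]
  unfold dS
  congr 1
  funext s
  exact h s ω

lemma integral_cyl_transport (t : ℝ) (D : Ed d ≃ₗᵢ[ℝ] Ed d) {G : ℝ × Sph d → ℝ}
    (hG : Continuous G) :
    ∫ p, G (p.1 - t, sphMap d D p.2) ∂cylMeasure d = ∫ p, G p ∂cylMeasure d := by
  have hm : MeasurePreserving (fun p : ℝ × Sph d => (p.1 - t, sphMap d D p.2)) (cylMeasure d)
      (cylMeasure d) :=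
    (measurePreserving_sub_right volume t).prod (measurePreserving_sphMap d D)
  conv_rhs => rw [← hm.map_eq]
  rw [integral_map hm.measurable.aemeasurable hG.aestronglyMeasurable]

lemma h1NormSq_transport (Λ : ℝ) (hφ : ContDiff ℝ 1 φ) (hψ : ContDiff ℝ 1 ψ)
    (h : ∀ (s : ℝ) (ω : Sph d), φ (s, (ω : Ed d)) = c * ψ (s - t, D (ω : Ed d))) :
    h1NormSq d Λ φ = c ^ 2 * h1NormSq d Λ ψ := by
  have c1 := continuous_dS hψ
  have c2 := continuous_sgrad hψ
  have c3 := continuous_cylVal hψ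
  unfold h1NormSq
  have cG : Continuous fun p => dS d ψ p ^ 2 + ‖sgrad d ψ p‖ ^ 2 + Λ * cylVal d ψ p ^ 2 := by
    fun_prop
  rw [← integral_cyl_transport t D cG, ← integral_const_mul]
  refine integral_congr_ae (Eventually.of_forall fun p => ?_)
  obtain ⟨s, ω⟩ := p
  simp only [sgrad_transport hφ hψ h, dS_transport hψ h, norm_smul, mul_pow, norm_eq_abs, sq_abs,
    LinearIsometryEquiv.norm_map]
  have : cylVal d φ (s, ω) = c * cylVal d ψ (s - t, sphMap d D ω) := h s ω
  rw [this]
  ring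

lemma lqNorm_sq (q : ℝ) (φ : ℝ × Ed d → ℝ) :
    lqNorm d q φ ^ 2 = (∫ p, |cylVal d φ p| ^ q ∂cylMeasure d) ^ (2 / q) := by
  unfold lqNorm
  rw [← rpow_two, ← rpow_mul (integral_nonneg fun p => by positivity)]
  congr 1; ring

lemma lqNorm_transport {q : ℝ} (hq : 2 < q) (hψ : ContDiff ℝ 1 ψ)
    (h : ∀ (s : ℝ) (ω : Sph d), φ (s, (ω : Ed d)) = c * ψ (s - t, D (ω : Ed d))) :
    lqNorm d q φ ^ 2 = c ^ 2 * lqNorm d q ψ ^ 2 := by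
  have c3 := continuous_cylVal hψ
  have hq0 : 0 < q := by linarith
  have e : ∫ p, |cylVal d φ p| ^ q ∂cylMeasure d =
      |c| ^ q * ∫ p, |cylVal d ψ p| ^ q ∂cylMeasure d := by
    rw [← integral_cyl_transport t D (c3.abs.rpow_const fun _ => Or.inr hq0.le),
      ← integral_const_mul]
    refine integral_congr_ae (Eventually.of_forall fun p => ?_)
    have : cylVal d φ p = c * cylVal d ψ (p.1 - t, sphMap d D p.2) := h p.1 p.2
    simp only
    rw [this, abs_mul, mul_rpow (abs_nonneg _) (abs_nonneg _)]
  rw [lqNorm_sq, lqNorm_sq, e, mul_rpow (by positivity)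
    (integral_nonneg fun p => by positivity), ← rpow_mul (abs_nonneg _),
    mul_div_cancel₀ _ hq0.ne', rpow_two, sq_abs]

end Transport

/-! ### The zero mode and the integrals of the expansion -/

/-- The zero mode `w = u^{q/2} ω_d`. -/
noncomputable def Wcyl (d : ℕ) (q Λ : ℝ) : ℝ × Ed d → ℝ :=
  fun z => Ufun q Λ z.1 ^ (q / 2) * coordLast d z.2

/-- `N = ∫ u^q`. -/
noncomputable def Nint (d : ℕ) (q Λ : ℝ) : ℝ := ∫ p, Ufun q Λ p.1 ^ q ∂cylMeasure d

/-- `P = ∫ u^{2q-2} ω_d²`. -/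
noncomputable def Pint (d : ℕ) (q Λ : ℝ) : ℝ :=
  ∫ p, Ufun q Λ p.1 ^ (2 * q - 2) * coordLast d (p.2 : Ed d) ^ 2 ∂cylMeasure d

/-- `Q = ∫ u^{3q-4} ω_d⁴`. -/
noncomputable def Qint (d : ℕ) (q Λ : ℝ) : ℝ :=
  ∫ p, Ufun q Λ p.1 ^ (3 * q - 4) * coordLast d (p.2 : Ed d) ^ 4 ∂cylMeasure d

/-- `S = ∫ u^{2q-3} ω_d² R`. -/
noncomputable def Sint (d : ℕ) (q Λ : ℝ) (R : ℝ × Ed d → ℝ) : ℝ :=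
  ∫ p, Ufun q Λ p.1 ^ (2 * q - 3) * coordLast d (p.2 : Ed d) ^ 2 * cylVal d R p ∂cylMeasure d

/-- `T = ∫ u^{q-2} R²`. -/
noncomputable def Tint (d : ℕ) (q Λ : ℝ) (R : ℝ × Ed d → ℝ) : ℝ :=
  ∫ p, Ufun q Λ p.1 ^ (q - 2) * cylVal d R p ^ 2 ∂cylMeasure d

/-- `v = u + μ (w + R)`, the function whose modulated rescalings are the `u_n`. -/
noncomputable def Vcyl (d : ℕ) (q Λ μ : ℝ) (R : ℝ × Ed d → ℝ) : ℝ × Ed d → ℝ :=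
  fun z => Ucyl d q Λ z + μ * (Wcyl d q Λ z + 1 * R z)

/-- `f` is integrable with integral `I`. -/
def HasInt {X : Type*} [MeasurableSpace X] (ν : Measure X) (f : X → ℝ) (I : ℝ) : Prop :=
  Integrable f ν ∧ ∫ x, f x ∂ν = I

section HasInt

variable {X : Type*} [MeasurableSpace X] {ν : Measure X} {f g : X → ℝ} {I J : ℝ}

lemma HasInt.add (h : HasInt ν f I) (h' : HasInt ν g J) : HasInt ν (fun x => f x + g x) (I + J) :=
  ⟨h.1.add h'.1, by rw [integral_add h.1 h'.1, h.2, h'.2]⟩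

lemma HasInt.mul (c : ℝ) (h : HasInt ν f I) : HasInt ν (fun x => c * f x) (c * I) :=
  ⟨h.1.const_mul c, by rw [integral_const_mul, h.2]⟩

lemma MeasureTheory.Integrable.hasInt (h : Integrable f ν) : HasInt ν f (∫ x, f x ∂ν) := ⟨h, rfl⟩

end HasInt

section Main

variable {d : ℕ} {q Λ : ℝ}

lemma Wcyl_eq (hd : 2 ≤ d) :
    Wcyl d q Λ = fun z => Ufun q Λ z.1 ^ (q / 2) * z.2 ⟨d - 1, by lia⟩ := by
  funext z; simp only [Wcyl, coordLast_eq hd]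

lemma contDiff_one_coord (l : Fin d) : ContDiff ℝ 1 fun x : Ed d => x l := by fun_prop

lemma hasEn_U (hq : 2 < q) (hΛ : 0 < Λ) : HasEn d Λ (Ucyl d q Λ) := by
  obtain ⟨g', h⟩ := profile_U hq hΛ
  have := h.hasEn (contDiff_const (c := (1 : ℝ)) : ContDiff ℝ 1 fun _ : Ed d => (1 : ℝ)) Λ
  simp only [mul_one] at this
  exact this

lemma hasEn_W (hd : 2 ≤ d) (hq : 2 < q) (hΛ : 0 < Λ) : HasEn d Λ (Wcyl d q Λ) := by
  obtain ⟨g', h⟩ := profile_W hq hΛ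
  rw [Wcyl_eq hd]
  exact h.hasEn (contDiff_one_coord ⟨d - 1, by lia⟩) Λ

/-- The Euler–Lagrange equation of `u` in weak form. -/
lemma inner_U (hq : 2 < q) (hΛ : 0 < Λ) {φ : ℝ × Ed d → ℝ} (hφ : HasEn d Λ φ) :
    h1Inner d Λ φ (Ucyl d q Λ) = ∫ p, Ufun q Λ p.1 ^ (q - 1) * cylVal d φ p ∂cylMeasure d := by
  obtain ⟨g', h⟩ := profile_U hq hΛ
  refine (h.weak_radial hΛ hφ).trans (integral_congr_ae (Eventually.of_forall fun p => ?_))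
  ring

/-- The linearized equation satisfied by the zero mode `w`; this is where the Felli–Schneider
condition enters. -/
lemma inner_W (hd : 2 ≤ d) (hq : 2 < q) (hΛ : 0 < Λ)
    (hFS : Λ = 4 * ((d : ℝ) - 1) / (q ^ 2 - 4)) {φ : ℝ × Ed d → ℝ} (hφ : HasEn d Λ φ) :
    h1Inner d Λ φ (Wcyl d q Λ) = (q - 1) * ∫ p, Ufun q Λ p.1 ^ (q - 2) * Ufun q Λ p.1 ^ (q / 2) *
      coordLast d (p.2 : Ed d) * cylVal d φ p ∂cylMeasure d := by
  obtain ⟨g', h⟩ := profile_W hq hΛ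
  have hFS' : (d : ℝ) - 1 + Λ = q ^ 2 / 4 * Λ := by
    have : q ^ 2 - 4 ≠ 0 := by nlinarith
    rw [eq_div_iff this] at hFS
    linarith
  rw [Wcyl_eq hd, h.weak_coord ⟨d - 1, by lia⟩ hΛ hφ, ← integral_const_mul]
  refine integral_congr_ae (Eventually.of_forall fun p => ?_)
  simp only [hFS', coordLast_eq hd]
  ring

lemma integrable_U_mul (hq : 2 < q) (hΛ : 0 < Λ) {p : ℝ} (hp : 0 < p) (m : ℕ) :
    Integrable (fun z : ℝ × Sph d => Ufun q Λ z.1 ^ p * coordLast d (z.2 : Ed d) ^ m)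
      (cylMeasure d) :=
  integrable_mul_cyl (integrable_Ufun_rpow hq hΛ hp)
    (((continuous_coordLast d).comp continuous_subtype_val).pow m)

lemma integrable_U_rpow (hq : 2 < q) (hΛ : 0 < Λ) {p : ℝ} (hp : 0 < p) :
    Integrable (fun z : ℝ × Sph d => Ufun q Λ z.1 ^ p) (cylMeasure d) := by
  simpa using integrable_U_mul (d := d) hq hΛ hp 0

lemma integral_odd (hd : 2 ≤ d) (f : ℝ → ℝ) {m : ℕ} (hm : Odd m) :
    ∫ z : ℝ × Sph d, f z.1 * coordLast d (z.2 : Ed d) ^ m ∂cylMeasure d = 0 := by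
  have hc : Continuous fun ω : Sph d => coordLast d (ω : Ed d) ^ m :=
    ((continuous_coordLast d).comp continuous_subtype_val).pow m
  unfold cylMeasure
  rw [integral_prod_mul f fun ω : Sph d => coordLast d (ω : Ed d) ^ m,
    integral_sph_odd d hc, mul_zero]
  intro ω
  have : ((sphMap d (LinearIsometryEquiv.neg ℝ) ω : Sph d) : Ed d) = -(ω : Ed d) := rfl
  simp [this, coordLast_eq hd, hm.neg_pow]

lemma Nint_pos (hd : 2 ≤ d) (hq : 2 < q) (hΛ : 0 < Λ) : 0 < Nint d q Λ := by
  unfold Nint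
  rw [integral_pos_iff_support_of_nonneg (fun z => (rpow_pos_of_pos (Ufun_pos hq hΛ _) _).le)
    (integrable_U_rpow hq hΛ (by linarith))]
  rw [show Function.support (fun z : ℝ × Sph d => Ufun q Λ z.1 ^ q) = univ from
    eq_univ_of_forall fun z => (rpow_pos_of_pos (Ufun_pos hq hΛ _) _).ne']
  have : NeZero d := ⟨by lia⟩
  have h1 : sphMeasure d univ ≠ 0 := by
    unfold sphMeasure
    rw [Measure.measure_univ_ne_zero]
    exact Measure.toSphere_ne_zero _
  unfold cylMeasure
  rw [← univ_prod_univ, Measure.prod_prod]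
  simp [pos_iff_ne_zero, h1]

lemma inner_WU (hd : 2 ≤ d) (hq : 2 < q) (hΛ : 0 < Λ) :
    h1Inner d Λ (Wcyl d q Λ) (Ucyl d q Λ) = 0 := by
  rw [inner_U hq hΛ (hasEn_W hd hq hΛ)]
  refine Eq.trans (integral_congr_ae (Eventually.of_forall fun p => ?_))
    (integral_odd hd (fun s => Ufun q Λ s ^ (q - 1) * Ufun q Λ s ^ (q / 2)) odd_one)
  simp only [cylVal, Wcyl]
  ring

lemma h1NormSq_U (hq : 2 < q) (hΛ : 0 < Λ) : h1NormSq d Λ (Ucyl d q Λ) = Nint d q Λ := by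
  rw [h1NormSq_eq_inner, inner_U hq hΛ (hasEn_U hq hΛ)]
  refine integral_congr_ae (Eventually.of_forall fun p => ?_)
  have := rpow_add_one (Ufun_pos hq hΛ p.1).ne' (q - 1)
  simp only [cylVal, Ucyl]
  rw [← this]; congr 1; ring

lemma h1NormSq_W (hd : 2 ≤ d) (hq : 2 < q) (hΛ : 0 < Λ)
    (hFS : Λ = 4 * ((d : ℝ) - 1) / (q ^ 2 - 4)) :
    h1NormSq d Λ (Wcyl d q Λ) = (q - 1) * Pint d q Λ := by
  rw [h1NormSq_eq_inner, inner_W hd hq hΛ hFS (hasEn_W hd hq hΛ)]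
  congr 1
  refine integral_congr_ae (Eventually.of_forall fun p => ?_)
  have hu := Ufun_pos hq hΛ p.1
  simp only [cylVal, Wcyl]
  rw [show 2 * q - 2 = (q - 2) + q / 2 + q / 2 by ring, rpow_add hu, rpow_add hu]
  ring

/-- The energy of `v`: all cross terms vanish by orthogonality and parity. -/
lemma h1NormSq_V (hd : 2 ≤ d) (hq : 2 < q) (hΛ : 0 < Λ)
    (hFS : Λ = 4 * ((d : ℝ) - 1) / (q ^ 2 - 4)) {R : ℝ × Ed d → ℝ} (hR : HasEn d Λ R)
    (h1 : h1Inner d Λ R (Ucyl d q Λ) = 0) (h2 : h1Inner d Λ R (Wcyl d q Λ) = 0) (μ : ℝ) :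
    h1NormSq d Λ (Vcyl d q Λ μ R) =
      Nint d q Λ + μ ^ 2 * ((q - 1) * Pint d q Λ + h1NormSq d Λ R) := by
  have hU := hasEn_U (d := d) hq hΛ
  have hW := hasEn_W hd hq hΛ
  have hWR := hW.add_mul hΛ hR 1
  have hcross : h1Inner d Λ (fun z => Wcyl d q Λ z + 1 * R z) (Ucyl d q Λ) = 0 := by
    have a1 := inner_WU hd hq hΛ
    rw [inner_U hq hΛ hW] at a1
    rw [inner_U hq hΛ hR] at h1
    rw [inner_U hq hΛ hWR]
    have cU : Continuous fun p : ℝ × Sph d => Ufun q Λ p.1 ^ (q - 1) :=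
      (continuous_Ufun_rpow hq hΛ _).comp continuous_fst
    have sU : Integrable (fun p : ℝ × Sph d => (Ufun q Λ p.1 ^ (q - 1)) ^ 2) (cylMeasure d) := by
      simp only [← rpow_mul_natCast (Ufun_pos hq hΛ _).le]
      exact integrable_U_rpow hq hΛ (by push_cast; linarith)
    have i1 := integrable_mul_of_sq cU (continuous_cylVal hW.1) sU (hW.sq hΛ).2.2
    have i2 := integrable_mul_of_sq cU (continuous_cylVal hR.1) sU (hR.sq hΛ).2.2
    have := integral_add i1 i2
    rw [a1, h1, add_zero] at this
    rw [← this]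
    refine integral_congr_ae (Eventually.of_forall fun p => ?_)
    simp only [cylVal]
    ring
  unfold Vcyl
  rw [h1NormSq_add_mul hΛ hU hWR, hcross, h1NormSq_add_mul hΛ hW hR, h2, h1NormSq_U hq hΛ,
    h1NormSq_W hd hq hΛ hFS]
  ring

lemma lqNorm_U_sq (hq : 2 < q) (hΛ : 0 < Λ) :
    lqNorm d q (Ucyl d q Λ) ^ 2 = Nint d q Λ ^ (2 / q) := by
  rw [lqNorm_sq]
  simp only [cylVal, Ucyl, abs_of_pos (Ufun_pos hq hΛ _)]
  rfl

/-- Testing the inequality defining `C_*` with `u`. -/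
lemma Cstar_le (hd : 2 ≤ d) (hq : 2 < q) (hΛ : 0 < Λ) :
    Cstar d Λ q ≤ Nint d q Λ ^ (1 - 2 / q) := by
  have hN := Nint_pos hd hq hΛ
  refine csSup_le ⟨0, fun φ _ => ?_⟩ fun c hc => ?_
  · rw [zero_mul]
    exact integral_nonneg fun p => by positivity
  · have hU := hasEn_U (d := d) hq hΛ
    have hm : MemH1 d Λ q (Ucyl d q Λ) := by
      refine ⟨hU.1, hU.2, ?_⟩
      simp only [cylVal, Ucyl, abs_of_pos (Ufun_pos hq hΛ _)]
      exact integrable_U_rpow hq hΛ (by linarith)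
    have := hc _ hm
    rw [lqNorm_U_sq hq hΛ, h1NormSq_U hq hΛ] at this
    rw [rpow_sub hN, rpow_one, le_div_iff₀ (rpow_pos_of_pos hN _)]
    exact this

end Main

/-! ### The `L^q`-norm of `v` -/

section Final

variable {d : ℕ} {q Λ : ℝ}

/-- The pointwise expansion of `|v|^q`, in the form to be integrated. -/
lemma pointwise_V (hd : 2 ≤ d) (hq : 2 < q) (hΛ : 0 < Λ) :
    ∃ K, 0 ≤ K ∧ ∀ (μ : ℝ) (R : ℝ × Ed d → ℝ) (p : ℝ × Sph d), |μ| ≤ 1 →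
      |μ| * betaV q Λ ^ ((q - 2) / 2) ≤ 1 / 2 →
      |cylVal d (Vcyl d q Λ μ R) p| ^ q ≤
        Ufun q Λ p.1 ^ q
        + q * μ * (Ufun q Λ p.1 ^ (q + (q - 2) / 2) * coordLast d (p.2 : Ed d) ^ 1)
        + q * (q - 1) / 2 * μ ^ 2 * (Ufun q Λ p.1 ^ (2 * q - 2) * coordLast d (p.2 : Ed d) ^ 2)
        + binCoef q 3 * μ ^ 3 *
          (Ufun q Λ p.1 ^ (q + (q - 2) / 2 * 3) * coordLast d (p.2 : Ed d) ^ 3)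
        + binCoef q 4 * μ ^ 4 * (Ufun q Λ p.1 ^ (3 * q - 4) * coordLast d (p.2 : Ed d) ^ 4)
        + q * μ * (Ufun q Λ p.1 ^ (q - 1) * cylVal d R p)
        + q * (q - 1) * μ ^ 2 * (Ufun q Λ p.1 ^ (q - 2) * Ufun q Λ p.1 ^ (q / 2) *
          coordLast d (p.2 : Ed d) * cylVal d R p)
        + q * (q - 1) * (q - 2) / 2 * μ ^ 3 *
          (Ufun q Λ p.1 ^ (2 * q - 3) * coordLast d (p.2 : Ed d) ^ 2 * cylVal d R p)
        + q * (q - 1) / 2 * μ ^ 2 * (Ufun q Λ p.1 ^ (q - 2) * cylVal d R p ^ 2)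
        + K * (|μ| ^ 5 * Ufun q Λ p.1 ^ q
          + |μ| ^ min q 3 * (|cylVal d R p| ^ q + cylVal d R p ^ 2)) := by
  have hβ := betaV_pos hq hΛ
  obtain ⟨K, hK, h⟩ := pointwise_expansion hq (betaV q Λ) (betaV q Λ ^ ((q - 2) / 2)) hβ
    (by positivity)
  refine ⟨K, hK, fun μ R p h1 h2 => ?_⟩
  have hu := Ufun_pos hq hΛ p.1
  set U := Ufun q Λ p.1 with hU
  set x := coordLast d (p.2 : Ed d) with hx
  set r := cylVal d R p with hr
  have ha : |U ^ ((q - 2) / 2) * x| ≤ betaV q Λ ^ ((q - 2) / 2) := by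
    rw [abs_mul, abs_of_pos (rpow_pos_of_pos hu _)]
    have e1 : U ^ ((q - 2) / 2) ≤ betaV q Λ ^ ((q - 2) / 2) :=
      rpow_le_rpow hu.le (Ufun_le hq hΛ _) (by linarith)
    exact (mul_le_of_le_one_right (rpow_pos_of_pos hu _).le (abs_coordLast_le hd _)).trans e1
  have main := h U (U ^ ((q - 2) / 2) * x) μ r hu (Ufun_le hq hΛ _) ha h1 h2
  have ev : cylVal d (Vcyl d q Λ μ R) p = U + μ * (U * (U ^ ((q - 2) / 2) * x) + r) := by
    have : U ^ (q / 2) = U * U ^ ((q - 2) / 2) := by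
      rw [show q / 2 = 1 + (q - 2) / 2 by ring, rpow_add hu, rpow_one]
    simp only [cylVal, Vcyl, Ucyl, Wcyl]
    simp only [← hU, ← hx, this, hr, cylVal]
    ring
  have pw : ∀ m : ℕ, (U ^ ((q - 2) / 2)) ^ m = U ^ ((q - 2) / 2 * m) := fun m => by
    rw [rpow_mul_natCast hu.le]
  have e1 : U ^ q * (U ^ ((q - 2) / 2) * x) = U ^ (q + (q - 2) / 2) * x ^ 1 := by
    rw [rpow_add hu]; ring
  have e2 : U ^ q * (U ^ ((q - 2) / 2) * x) ^ 2 = U ^ (2 * q - 2) * x ^ 2 := by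
    rw [mul_pow, pw, ← mul_assoc, ← rpow_add hu]; congr 2; push_cast; ring
  have e3 : U ^ q * (U ^ ((q - 2) / 2) * x) ^ 3 = U ^ (q + (q - 2) / 2 * 3) * x ^ 3 := by
    rw [mul_pow, pw, ← mul_assoc, ← rpow_add hu]; norm_num
  have e4 : U ^ q * (U ^ ((q - 2) / 2) * x) ^ 4 = U ^ (3 * q - 4) * x ^ 4 := by
    rw [mul_pow, pw, ← mul_assoc, ← rpow_add hu]; congr 2; push_cast; ring
  have e5 : U ^ (q - 1) * (U ^ ((q - 2) / 2) * x) * r = U ^ (q - 2) * U ^ (q / 2) * x * r := by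
    rw [← rpow_add hu, ← mul_assoc, ← rpow_add hu]; congr 3; ring
  have e6 : U ^ (q - 1) * (U ^ ((q - 2) / 2) * x) ^ 2 * r = U ^ (2 * q - 3) * x ^ 2 * r := by
    rw [mul_pow, pw, ← mul_assoc, ← rpow_add hu]; congr 3; push_cast; ring
  rw [e1, e2, e3, e4, e5, e6] at main
  rw [ev]
  exact main

lemma integrable_Upow_mul_R (hq : 2 < q) (hΛ : 0 < Λ) {R : ℝ × Ed d → ℝ}
    (hR : HasEn d Λ R) {p : ℝ} (hp : 0 < p) (m : ℕ) :
    Integrable (fun z : ℝ × Sph d => Ufun q Λ z.1 ^ p * coordLast d (z.2 : Ed d) ^ m *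
      cylVal d R z) (cylMeasure d) := by
  have c1 : Continuous fun z : ℝ × Sph d => Ufun q Λ z.1 ^ p :=
    (continuous_Ufun_rpow hq hΛ p).comp continuous_fst
  have c2 := continuous_coordLast d
  refine integrable_mul_of_sq (by fun_prop) (continuous_cylVal hR.1) ?_ (hR.sq hΛ).2.2
  have := integrable_U_mul (d := d) hq hΛ (by linarith : 0 < p * 2) (m * 2)
  refine this.congr (Eventually.of_forall fun z => ?_)
  have e := rpow_mul_natCast (Ufun_pos hq hΛ z.1).le p 2
  push_cast at e
  simp only
  rw [e, pow_mul, mul_pow]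

lemma integrable_T (hq : 2 < q) (hΛ : 0 < Λ) {R : ℝ × Ed d → ℝ} (hR : HasEn d Λ R) :
    Integrable (fun z : ℝ × Sph d => Ufun q Λ z.1 ^ (q - 2) * cylVal d R z ^ 2) (cylMeasure d) := by
  have c1 : Continuous fun z : ℝ × Sph d => Ufun q Λ z.1 ^ (q - 2) :=
    (continuous_Ufun_rpow hq hΛ _).comp continuous_fst
  have c2 := continuous_cylVal hR.1
  refine ((hR.sq hΛ).2.2.const_mul (betaV q Λ ^ (q - 2))).mono'
    (by fun_prop : Continuous _).aestronglyMeasurable (Eventually.of_forall fun z => ?_)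
  have hu := Ufun_pos hq hΛ z.1
  rw [norm_eq_abs, abs_of_nonneg (by positivity)]
  gcongr
  exact Ufun_le hq hΛ _

lemma integral_sq_le (hΛ : 0 < Λ) {R : ℝ × Ed d → ℝ} (hR : HasEn d Λ R) :
    ∫ z, cylVal d R z ^ 2 ∂cylMeasure d ≤ h1NormSq d Λ R / Λ := by
  rw [le_div_iff₀ hΛ, mul_comm, ← integral_const_mul]
  refine integral_mono ((hR.sq hΛ).2.2.const_mul Λ) hR.2 fun z => ?_
  have := sq_nonneg (dS d R z)
  have := sq_nonneg ‖sgrad d R z‖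
  simp only
  linarith

lemma h1NormSq_nonneg (hΛ : 0 < Λ) (R : ℝ × Ed d → ℝ) : 0 ≤ h1NormSq d Λ R :=
  integral_nonneg fun _ => by positivity

lemma Tint_nonneg (hq : 2 < q) (hΛ : 0 < Λ) (R : ℝ × Ed d → ℝ) : 0 ≤ Tint d q Λ R :=
  integral_nonneg fun _ => mul_nonneg (rpow_pos_of_pos (Ufun_pos hq hΛ _) _).le (sq_nonneg _)

lemma Tint_le (hq : 2 < q) (hΛ : 0 < Λ) {R : ℝ × Ed d → ℝ} (hR : HasEn d Λ R) :
    Tint d q Λ R ≤ betaV q Λ ^ (q - 2) / Λ * h1NormSq d Λ R := by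
  have hβ := betaV_pos hq hΛ
  calc Tint d q Λ R ≤ ∫ z, betaV q Λ ^ (q - 2) * cylVal d R z ^ 2 ∂cylMeasure d := by
        refine integral_mono (integrable_T hq hΛ hR) ((hR.sq hΛ).2.2.const_mul _) fun z => ?_
        have hu := Ufun_pos hq hΛ z.1
        simp only
        gcongr
        exact Ufun_le hq hΛ _
    _ = betaV q Λ ^ (q - 2) * ∫ z, cylVal d R z ^ 2 ∂cylMeasure d := integral_const_mul _ _
    _ ≤ betaV q Λ ^ (q - 2) * (h1NormSq d Λ R / Λ) := by
        gcongr; exact integral_sq_le hΛ hR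
    _ = _ := by ring

lemma Sint_le (hd : 2 ≤ d) (hq : 2 < q) (hΛ : 0 < Λ) :
    ∃ S₀, 0 ≤ S₀ ∧ ∀ R : ℝ × Ed d → ℝ, HasEn d Λ R → h1NormSq d Λ R ≤ 1 →
      |Sint d q Λ R| ≤ S₀ := by
  have iU := integrable_U_rpow (d := d) hq hΛ (by linarith : 0 < (2 * q - 3) * 2)
  refine ⟨∫ z : ℝ × Sph d, Ufun q Λ z.1 ^ ((2 * q - 3) * 2) ∂cylMeasure d + 1 / Λ,
    add_nonneg (integral_nonneg fun z => (rpow_pos_of_pos (Ufun_pos hq hΛ _) _).le)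
      (by positivity), fun R hR h1 => ?_⟩
  have iR := (hR.sq hΛ).2.2
  calc |Sint d q Λ R| = ‖∫ p, Ufun q Λ p.1 ^ (2 * q - 3) * coordLast d (p.2 : Ed d) ^ 2 *
        cylVal d R p ∂cylMeasure d‖ := rfl
    _ ≤ ∫ z, (Ufun q Λ z.1 ^ ((2 * q - 3) * 2) + cylVal d R z ^ 2) ∂cylMeasure d := by
        refine norm_integral_le_of_norm_le (iU.add iR)
          (Eventually.of_forall fun z => ?_)
        have hu := rpow_pos_of_pos (Ufun_pos hq hΛ z.1) (2 * q - 3)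
        have e := rpow_mul_natCast (Ufun_pos hq hΛ z.1).le (2 * q - 3) 2
        have hx := abs_coordLast_le hd z.2
        push_cast at e
        rw [e, norm_mul, norm_mul, norm_eq_abs, norm_eq_abs, norm_eq_abs, abs_of_pos hu, abs_pow,
          ← sq_abs (cylVal d R z)]
        have h3 : |coordLast d (z.2 : Ed d)| ^ 2 ≤ 1 := pow_le_one₀ (abs_nonneg _) hx
        have h4 : Ufun q Λ z.1 ^ (2 * q - 3) * |coordLast d (z.2 : Ed d)| ^ 2 ≤
          Ufun q Λ z.1 ^ (2 * q - 3) := mul_le_of_le_one_right hu.le h3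
        nlinarith [mul_le_mul_of_nonneg_right h4 (abs_nonneg (cylVal d R z)),
          sq_nonneg (Ufun q Λ z.1 ^ (2 * q - 3) - |cylVal d R z|), sq_nonneg |cylVal d R z|]
    _ = ∫ z : ℝ × Sph d, Ufun q Λ z.1 ^ ((2 * q - 3) * 2) ∂cylMeasure d +
          ∫ z, cylVal d R z ^ 2 ∂cylMeasure d := integral_add iU iR
    _ ≤ _ := by
        have := integral_sq_le hΛ hR
        have h5 : h1NormSq d Λ R / Λ ≤ 1 / Λ := by gcongr
        linarith

/-- The expansion of `∫ |v|^q`: the integrals with odd powers of `ω_d` vanish, and so do those of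
`u^{q-1} R` and `u^{q-2} w R`, by orthogonality and the weak equations of `u` and `w`. -/
lemma integral_V_le (hd : 2 ≤ d) (hq : 2 < q) (hΛ : 0 < Λ)
    (hFS : Λ = 4 * ((d : ℝ) - 1) / (q ^ 2 - 4)) :
    ∃ K, 0 ≤ K ∧ ∀ (μ : ℝ) (R : ℝ × Ed d → ℝ), |μ| ≤ 1 →
      |μ| * betaV q Λ ^ ((q - 2) / 2) ≤ 1 / 2 → MemH1 d Λ q R →
      h1Inner d Λ R (Ucyl d q Λ) = 0 → h1Inner d Λ R (Wcyl d q Λ) = 0 →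
      ∫ p, |cylVal d (Vcyl d q Λ μ R) p| ^ q ∂cylMeasure d ≤ Nint d q Λ +
        (q * (q - 1) / 2 * μ ^ 2 * Pint d q Λ + binCoef q 4 * μ ^ 4 * Qint d q Λ
        + q * (q - 1) * (q - 2) / 2 * μ ^ 3 * Sint d q Λ R
        + q * (q - 1) / 2 * μ ^ 2 * Tint d q Λ R
        + K * (|μ| ^ 5 * Nint d q Λ + |μ| ^ min q 3 *
          (∫ p, |cylVal d R p| ^ q ∂cylMeasure d + ∫ p, cylVal d R p ^ 2 ∂cylMeasure d))) := by
  obtain ⟨K, hK, h⟩ := pointwise_V hd hq hΛ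
  refine ⟨K, hK, fun μ R h1 h2 hR o1 o2 => ?_⟩
  have hE : HasEn d Λ R := ⟨hR.1, hR.2.1⟩
  rw [inner_U hq hΛ hE] at o1
  rw [inner_W hd hq hΛ hFS hE] at o2
  have o2' := (mul_eq_zero.1 o2).resolve_left (by linarith)
  have t0 : HasInt (cylMeasure d) (fun p => Ufun q Λ p.1 ^ q) (Nint d q Λ) :=
    ⟨integrable_U_rpow hq hΛ (by linarith), rfl⟩
  have t1 : HasInt (cylMeasure d) (fun p => Ufun q Λ p.1 ^ (q + (q - 2) / 2) *
      coordLast d (p.2 : Ed d) ^ 1) 0 :=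
    ⟨integrable_U_mul hq hΛ (by linarith) 1,
      integral_odd hd (fun s => Ufun q Λ s ^ (q + (q - 2) / 2)) odd_one⟩
  have t2 : HasInt (cylMeasure d) (fun p => Ufun q Λ p.1 ^ (2 * q - 2) *
      coordLast d (p.2 : Ed d) ^ 2) (Pint d q Λ) :=
    ⟨integrable_U_mul hq hΛ (by linarith) 2, rfl⟩
  have t3 : HasInt (cylMeasure d) (fun p => Ufun q Λ p.1 ^ (q + (q - 2) / 2 * 3) *
      coordLast d (p.2 : Ed d) ^ 3) 0 :=
    ⟨integrable_U_mul hq hΛ (by linarith) 3,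
      integral_odd hd (fun s => Ufun q Λ s ^ (q + (q - 2) / 2 * 3)) (by decide)⟩
  have t4 : HasInt (cylMeasure d) (fun p => Ufun q Λ p.1 ^ (3 * q - 4) *
      coordLast d (p.2 : Ed d) ^ 4) (Qint d q Λ) :=
    ⟨integrable_U_mul hq hΛ (by linarith) 4, rfl⟩
  have t5 : HasInt (cylMeasure d) (fun p => Ufun q Λ p.1 ^ (q - 1) * cylVal d R p) 0 :=
    ⟨by simpa using integrable_Upow_mul_R hq hΛ hE (by linarith : 0 < q - 1) 0, o1⟩
  have t6 : HasInt (cylMeasure d) (fun p => Ufun q Λ p.1 ^ (q - 2) * Ufun q Λ p.1 ^ (q / 2) *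
      coordLast d (p.2 : Ed d) * cylVal d R p) 0 := by
    refine ⟨?_, o2'⟩
    simpa only [rpow_add (Ufun_pos hq hΛ _), pow_one] using
      integrable_Upow_mul_R hq hΛ hE (by linarith : 0 < (q - 2) + q / 2) 1
  have t7 : HasInt (cylMeasure d) (fun p => Ufun q Λ p.1 ^ (2 * q - 3) *
      coordLast d (p.2 : Ed d) ^ 2 * cylVal d R p) (Sint d q Λ R) :=
    ⟨integrable_Upow_mul_R hq hΛ hE (by linarith) 2, rfl⟩
  have t8 : HasInt (cylMeasure d) (fun p => Ufun q Λ p.1 ^ (q - 2) * cylVal d R p ^ 2)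
      (Tint d q Λ R) := ⟨integrable_T hq hΛ hE, rfl⟩
  have t9 := (hR.2.2.hasInt.add (hE.sq hΛ).2.2.hasInt).mul (|μ| ^ min q 3)
  have t10 := ((t0.mul (|μ| ^ 5)).add t9).mul K
  have tot := ((((((((t0.add (t1.mul (q * μ))).add (t2.mul (q * (q - 1) / 2 * μ ^ 2))).add
    (t3.mul (binCoef q 3 * μ ^ 3))).add (t4.mul (binCoef q 4 * μ ^ 4))).add (t5.mul (q * μ))).add
    (t6.mul (q * (q - 1) * μ ^ 2))).add (t7.mul (q * (q - 1) * (q - 2) / 2 * μ ^ 3))).add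
    (t8.mul (q * (q - 1) / 2 * μ ^ 2))).add t10
  have hle := integral_mono_of_nonneg (μ := cylMeasure d)
    (f := fun p => |cylVal d (Vcyl d q Λ μ R) p| ^ q)
    (Eventually.of_forall fun p => rpow_nonneg (abs_nonneg _) _) tot.1
    (Eventually.of_forall fun p => h μ R p h1 h2)
  rw [tot.2] at hle
  refine hle.trans_eq ?_
  ring

end Final

/-! ### Assembling the expansion -/

section Assemble

variable {d : ℕ} {q Λ : ℝ}

lemma Aterm_eq (hq : 2 < q) (hΛ : 0 < Λ) {R : ℝ × Ed d → ℝ} (hR : HasEn d Λ R)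
    (C μ : ℝ) : Aterm d q Λ C μ R = μ ^ 2 * ((1 - C * |μ| ^ min (q - 2) 1) * h1NormSq d Λ R -
      (q - 1) * (Tint d q Λ R + (q - 2) * μ * Sint d q Λ R)) := by
  have i1 := integrable_T hq hΛ hR
  have i2 := integrable_Upow_mul_R hq hΛ hR (by linarith : 0 < 2 * q - 3) 2
  have e : ∫ p, (Ufun q Λ p.1 ^ (q - 2) * cylVal d R p ^ 2 +
      (q - 2) * μ * Ufun q Λ p.1 ^ (2 * q - 3) * coordLast d (p.2 : Ed d) ^ 2 * cylVal d R p)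
      ∂cylMeasure d = Tint d q Λ R + (q - 2) * μ * Sint d q Λ R := by
    unfold Tint Sint
    rw [← integral_const_mul, ← integral_add i1 (i2.const_mul _)]
    refine integral_congr_ae (Eventually.of_forall fun p => ?_)
    ring
  unfold Aterm
  rw [e]

lemma Bterm_eq (μ : ℝ) : Bterm d q Λ μ = μ ^ 4 * ((q - 1) * (q - 2) / 4) *
    ((q - 1) / Nint d q Λ * Pint d q Λ ^ 2 - (q - 3) / 3 * Qint d q Λ) := rfl

/-- `|μ|^{min(q,3)} = μ² |μ|^{min(q-2,1)}`, including `μ = 0`. -/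
lemma abs_rpow_min (hq : 2 < q) (μ : ℝ) :
    |μ| ^ min q 3 = μ ^ 2 * |μ| ^ min (q - 2) 1 := by
  have h1 : 0 < min (q - 2) 1 := lt_min (by linarith) one_pos
  have : min q 3 = 2 + min (q - 2) 1 := by
    rw [← min_add_add_left]; congr 1 <;> ring
  rw [this, rpow_add_of_nonneg (abs_nonneg _) (by norm_num) h1.le, rpow_two, sq_abs]

/-- A positive admissible constant controls `∫ |R|^q` linearly by small energies. -/
lemma integral_rpow_le (hq : 2 < q) (hΛ : 0 < Λ) {c : ℝ} (hc : 0 < c) {R : ℝ × Ed d → ℝ}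
    (h : c * lqNorm d q R ^ 2 ≤ h1NormSq d Λ R) (h1 : h1NormSq d Λ R ≤ 1) :
    ∫ p, |cylVal d R p| ^ q ∂cylMeasure d ≤ (1 / c) ^ (q / 2) * h1NormSq d Λ R := by
  set I := ∫ p, |cylVal d R p| ^ q ∂cylMeasure d with hI
  have hI0 : 0 ≤ I := integral_nonneg fun p => rpow_nonneg (abs_nonneg _) _
  have hρ := h1NormSq_nonneg hΛ R
  rw [lqNorm_sq, ← hI, mul_comm, ← le_div_iff₀ hc] at h
  have h2 := rpow_le_rpow (by positivity) h (by linarith : 0 ≤ q / 2)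
  rw [← rpow_mul hI0, show 2 / q * (q / 2) = 1 by field_simp, rpow_one] at h2
  refine h2.trans ?_
  rw [div_eq_mul_one_div, mul_comm, mul_rpow (by positivity) hρ]
  gcongr
  calc h1NormSq d Λ R ^ (q / 2) ≤ h1NormSq d Λ R ^ (1 : ℝ) :=
        rpow_le_rpow_of_exponent_ge' hρ h1 zero_le_one (by linarith)
    _ = _ := rpow_one _

/-- The deficit of `λ v(· - t, D ·)` in terms of `v`. -/
lemma deficit_transport (hd : 2 ≤ d) (hq : 2 < q) (hΛ : 0 < Λ)
    (hFS : Λ = 4 * ((d : ℝ) - 1) / (q ^ 2 - 4)) {u R : ℝ × Ed d → ℝ} (hu : ContDiff ℝ 1 u)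
    {lam t μ : ℝ} {D : Ed d ≃ₗᵢ[ℝ] Ed d} (hlam : lam ≠ 0) (hR : HasEn d Λ R)
    (hdec : ∀ s : ℝ, ∀ ω : Sph d, u (s, (ω : Ed d)) = lam * (Ufun q Λ (s - t) +
        μ * (Ufun q Λ (s - t) ^ (q / 2) * coordLast d (D (ω : Ed d)) + R (s - t, D (ω : Ed d)))))
    (o1 : h1Inner d Λ R (Ucyl d q Λ) = 0) (o2 : h1Inner d Λ R (Wcyl d q Λ) = 0) :
    (lam ^ 2)⁻¹ * deficitF d Λ q u =
      Nint d q Λ + μ ^ 2 * ((q - 1) * Pint d q Λ + h1NormSq d Λ R) -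
        Cstar d Λ q * (∫ p, |cylVal d (Vcyl d q Λ μ R) p| ^ q ∂cylMeasure d) ^ (2 / q) := by
  have hV : ContDiff ℝ 1 (Vcyl d q Λ μ R) :=
    ((hasEn_U hq hΛ).add_mul hΛ ((hasEn_W hd hq hΛ).add_mul hΛ hR 1) μ).1
  have hdec' : ∀ (s : ℝ) (ω : Sph d),
      u (s, (ω : Ed d)) = lam * Vcyl d q Λ μ R (s - t, D (ω : Ed d)) := fun s ω => by
    rw [hdec]; simp [Vcyl, Ucyl, Wcyl]
  unfold deficitF
  rw [h1NormSq_transport Λ hu hV hdec', lqNorm_transport hq hV hdec',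
    h1NormSq_V hd hq hΛ hFS hR o1 o2, lqNorm_sq]
  field_simp

/-- The expansion when some positive constant is admissible in the inequality defining `C_*`. -/
lemma expansion_pos (hd : 2 ≤ d) (hq : 2 < q) (hΛ : 0 < Λ)
    (hFS : Λ = 4 * ((d : ℝ) - 1) / (q ^ 2 - 4)) (hC : 0 < Cstar d Λ q) :
    ∃ C δ, 0 ≤ C ∧ 0 < δ ∧ ∀ (μ : ℝ) (R : ℝ × Ed d → ℝ), |μ| ≤ δ → MemH1 d Λ q R →
      h1NormSq d Λ R ≤ 1 →
      h1Inner d Λ R (Ucyl d q Λ) = 0 → h1Inner d Λ R (Wcyl d q Λ) = 0 →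
      Aterm d q Λ C μ R + Bterm d q Λ μ - C * |μ| ^ 5 ≤
      Nint d q Λ + μ ^ 2 * ((q - 1) * Pint d q Λ + h1NormSq d Λ R) -
        Cstar d Λ q * (∫ p, |cylVal d (Vcyl d q Λ μ R) p| ^ q ∂cylMeasure d) ^ (2 / q) := by
  have hN := Nint_pos hd hq hΛ
  have hβ := betaV_pos hq hΛ
  obtain ⟨c, hcS, hc⟩ := exists_lt_of_lt_csSup (by
    by_contra hne
    rw [not_nonempty_iff_eq_empty] at hne
    simp [Cstar, hne] at hC) hC
  obtain ⟨K, hK, hKint⟩ := integral_V_le hd hq hΛ hFS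
  obtain ⟨S₀, hS₀, hS⟩ := Sint_le hd hq hΛ
  set B := (1 / c) ^ (q / 2) + 1 / Λ with hB
  have hB0 : 0 ≤ B := by positivity
  obtain ⟨C, δ, hC0, hδ, hexp⟩ := norm_expansion hq hN (Pint d q Λ) (Qint d q Λ) S₀
    (betaV q Λ ^ (q - 2) / Λ) (K * (Nint d q Λ + B)) hS₀ (by positivity) (by positivity)
  set a₀ := betaV q Λ ^ ((q - 2) / 2) with ha₀
  have ha₀p : 0 < a₀ := by positivity
  refine ⟨C, min δ (min 1 (1 / (2 * a₀))), hC0, by positivity, fun μ R hμ hR hρ1 o1 o2 => ?_⟩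
  have hE : HasEn d Λ R := ⟨hR.1, hR.2.1⟩
  have hμδ : |μ| ≤ δ := hμ.trans (min_le_left _ _)
  have hμ1 : |μ| ≤ 1 := hμ.trans ((min_le_right _ _).trans (min_le_left _ _))
  have hμa : |μ| * a₀ ≤ 1 / 2 := by
    have := hμ.trans ((min_le_right _ _).trans (min_le_right _ _))
    rw [le_div_iff₀ (by positivity)] at this
    linarith
  have hρ := h1NormSq_nonneg hΛ R
  set ρ := h1NormSq d Λ R with hρdef
  have hRq := integral_rpow_le hq hΛ hc (hcS R hR) hρ1
  have hR2 := integral_sq_le hΛ hE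
  have hRq0 : 0 ≤ ∫ p, |cylVal d R p| ^ q ∂cylMeasure d :=
    integral_nonneg fun p => rpow_nonneg (abs_nonneg _) _
  have hR20 : 0 ≤ ∫ p, cylVal d R p ^ 2 ∂cylMeasure d := integral_nonneg fun p => sq_nonneg _
  set J := ∫ p, |cylVal d R p| ^ q ∂cylMeasure d + ∫ p, cylVal d R p ^ 2 ∂cylMeasure d with hJ
  have hJ0 : 0 ≤ J := add_nonneg hRq0 hR20
  have hJB : J ≤ B * ρ := by
    rw [hB, add_mul, one_div_mul_eq_div]; linarith
  have hI := hKint μ R hμ1 hμa hR o1 o2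
  set L := ∫ p, |cylVal d (Vcyl d q Λ μ R) p| ^ q ∂cylMeasure d with hL
  have hL0 : 0 ≤ L := integral_nonneg fun p => rpow_nonneg (abs_nonneg _) _
  have hm0 : 0 ≤ |μ| ^ min q 3 := by positivity
  have hEb : |K * (|μ| ^ 5 * Nint d q Λ + |μ| ^ min q 3 * J)| ≤
      K * (Nint d q Λ + B) * (|μ| ^ 5 + |μ| ^ min q 3 * ρ) := by
    rw [abs_of_nonneg (by positivity), mul_assoc]
    gcongr
    have k1 : |μ| ^ min q 3 * J ≤ |μ| ^ min q 3 * (B * ρ) := by gcongr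
    have k2 : 0 ≤ B * |μ| ^ 5 := by positivity
    have k3 : 0 ≤ Nint d q Λ * (|μ| ^ min q 3 * ρ) := by positivity
    linarith
  have main := hexp μ ρ (Sint d q Λ R) (Tint d q Λ R) _ L hμδ hρ hρ1 (hS R hE hρ1)
    (by rw [abs_of_nonneg (Tint_nonneg hq hΛ R)]; exact Tint_le hq hΛ hE) hEb hL0 hI
  have hCs : Cstar d Λ q * L ^ (2 / q) ≤ Nint d q Λ ^ (1 - 2 / q) * L ^ (2 / q) := by
    gcongr; exact Cstar_le hd hq hΛ
  rw [Aterm_eq hq hΛ hE, Bterm_eq, ← hρdef]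
  rw [abs_rpow_min hq] at main
  have hdiv : (q - 1) ^ 2 * (q - 2) / 4 / Nint d q Λ * μ ^ 4 * Pint d q Λ ^ 2 =
      μ ^ 4 * ((q - 1) * (q - 2) / 4) * ((q - 1) / Nint d q Λ * Pint d q Λ ^ 2) := by ring
  rw [hdiv] at main
  linarith

/-- If `C_* ≤ 0`, the deficit stays above `N > 0` while the right-hand side tends to zero. -/
lemma expansion_nonpos (hd : 2 ≤ d) (hq : 2 < q) (hΛ : 0 < Λ) (hC : Cstar d Λ q ≤ 0) :
    ∃ δ, 0 < δ ∧ ∀ (μ : ℝ) (R : ℝ × Ed d → ℝ), |μ| ≤ δ → MemH1 d Λ q R →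
      h1NormSq d Λ R ≤ 1 →
      Aterm d q Λ 0 μ R + Bterm d q Λ μ ≤
      Nint d q Λ + μ ^ 2 * ((q - 1) * Pint d q Λ + h1NormSq d Λ R) -
        Cstar d Λ q * (∫ p, |cylVal d (Vcyl d q Λ μ R) p| ^ q ∂cylMeasure d) ^ (2 / q) := by
  have hN := Nint_pos hd hq hΛ
  obtain ⟨S₀, hS₀, hS⟩ := Sint_le hd hq hΛ
  set b := ((q - 1) * (q - 2) / 4) *
    ((q - 1) / Nint d q Λ * Pint d q Λ ^ 2 - (q - 3) / 3 * Qint d q Λ) with hb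
  have hP : 0 ≤ Pint d q Λ := integral_nonneg fun p =>
    mul_nonneg (rpow_pos_of_pos (Ufun_pos hq hΛ _) _).le (sq_nonneg _)
  have hq1 : 0 < (q - 1) * (q - 2) := mul_pos (by linarith) (by linarith)
  set M := (q - 1) * (q - 2) * S₀ + |b| with hM
  have hM0 : 0 ≤ M := by positivity
  refine ⟨min 1 (Nint d q Λ / (M + 1)), by positivity, fun μ R hμ hR hρ1 => ?_⟩
  have hE : HasEn d Λ R := ⟨hR.1, hR.2.1⟩
  have hμ1 : |μ| ≤ 1 := hμ.trans (min_le_left _ _)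
  have hμN : |μ| * (M + 1) ≤ Nint d q Λ := by
    rw [← le_div_iff₀ (by positivity)]; exact hμ.trans (min_le_right _ _)
  have hL0 : 0 ≤ (∫ p, |cylVal d (Vcyl d q Λ μ R) p| ^ q ∂cylMeasure d) ^ (2 / q) :=
    rpow_nonneg (integral_nonneg fun p => rpow_nonneg (abs_nonneg _) _) _
  have hCL := mul_nonpos_of_nonpos_of_nonneg hC hL0
  have hT := Tint_nonneg hq hΛ R
  have s1 : |μ ^ 3 * Sint d q Λ R| ≤ |μ| * S₀ := by
    rw [abs_mul, abs_pow]
    have : |μ| ^ 3 ≤ |μ| := pow_le_of_le_one (abs_nonneg _) hμ1 (by norm_num)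
    exact mul_le_mul this (hS R hE hρ1) (abs_nonneg _) (abs_nonneg _)
  have s2 : μ ^ 4 * b ≤ |μ| * |b| := by
    refine (le_abs_self _).trans ?_
    rw [abs_mul, abs_pow]
    have : |μ| ^ 4 ≤ |μ| := pow_le_of_le_one (abs_nonneg _) hμ1 (by norm_num)
    exact mul_le_mul_of_nonneg_right this (abs_nonneg _)
  have s3 : -((q - 1) * (q - 2)) * (μ ^ 3 * Sint d q Λ R) ≤ (q - 1) * (q - 2) * (|μ| * S₀) := by
    have := mul_le_mul_of_nonneg_left ((neg_le_abs _).trans s1) hq1.le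
    linarith
  have s4 : 0 ≤ μ ^ 2 * ((q - 1) * Pint d q Λ) :=
    mul_nonneg (sq_nonneg _) (mul_nonneg (by linarith) hP)
  have s5 : 0 ≤ μ ^ 2 * ((q - 1) * Tint d q Λ R) :=
    mul_nonneg (sq_nonneg _) (mul_nonneg (by linarith) hT)
  have s6 : |μ| * M ≤ Nint d q Λ := by nlinarith [abs_nonneg μ]
  rw [Aterm_eq hq hΛ hE, Bterm_eq, mul_assoc (μ ^ 4), ← hb]
  rw [hM, mul_add] at s6
  linarith

end Assemble

/-- Quartic order expansion of the deficit functional. Under the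
Felli–Schneider condition, for a sequence `(u_n)` as in the projection on the non-trivial
zero modes, with decomposition data `λ_n, t_n, μ_n, D_n, R_n`, there are n-independent
constants `C, C' < ∞` such that, for large n,
`λ_n⁻² F(u_n) ≥ (A) + (B) - C'|μ_n|⁵`. -/
theorem quartic_expansion (d : ℕ) (hd : 2 ≤ d) (q Λ : ℝ) (hq : 2 < q)
    (hq' : d = 2 ∨ q < 2 * d / ((d : ℝ) - 2)) (hΛ : 0 < Λ)
    (hFS : Λ = 4 * ((d : ℝ) - 1) / (q ^ 2 - 4))
    (u : ℕ → ℝ × Ed d → ℝ) (hu : ∀ n, MemH1 d Λ q (u n))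
    (hnorm : Filter.Tendsto (fun n => lqNorm d q (u n) ^ 2) Filter.atTop (𝓝 1))
    (henergy : Filter.Tendsto (fun n => h1NormSq d Λ (u n)) Filter.atTop (𝓝 (Cstar d Λ q)))
    (hvan : Filter.Tendsto (fun n => deficitF d Λ q (u n) / distM d Λ q (u n) ^ 2)
      Filter.atTop (𝓝 0))
    (lam t μ : ℕ → ℝ) (D : ℕ → (Ed d ≃ₗᵢ[ℝ] Ed d)) (R : ℕ → ℝ × Ed d → ℝ)
    (hlam : ∀ n, lam n ≠ 0) (hR : ∀ n, MemH1 d Λ q (R n))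
    (hdec : ∀ n, ∀ s : ℝ, ∀ ω : Sph d,
      u n (s, (ω : Ed d)) = lam n * (Ufun q Λ (s - t n) +
        μ n * (Ufun q Λ (s - t n) ^ (q / 2) * coordLast d (D n (ω : Ed d)) +
          R n (s - t n, D n (ω : Ed d)))))
    (hμ : Filter.Tendsto μ Filter.atTop (𝓝 0))
    (hRn : Filter.Tendsto (fun n => Real.sqrt (h1NormSq d Λ (R n))) Filter.atTop (𝓝 0))
    (ho1 : ∀ n, h1Inner d Λ (R n) (Ucyl d q Λ) = 0)
    (ho2 : ∀ n, h1Inner d Λ (R n) (fun z => deriv (Ufun q Λ) z.1) = 0)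
    (ho3 : ∀ n, ∀ i : Fin d,
      h1Inner d Λ (R n) (fun z => Ufun q Λ z.1 ^ (q / 2) * z.2 i) = 0) :
    ∃ C C' : ℝ, 0 ≤ C ∧ ∀ᶠ n in Filter.atTop,
      Aterm d q Λ C (μ n) (R n) + Bterm d q Λ (μ n) - C' * |μ n| ^ (5 : ℕ) ≤
        ((lam n) ^ 2)⁻¹ * deficitF d Λ q (u n) := by
  have hμ1 : Tendsto (fun n => |μ n|) atTop (𝓝 0) := by simpa using hμ.abs
  have hρ : ∀ᶠ n in atTop, h1NormSq d Λ (R n) ≤ 1 := by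
    filter_upwards [hRn.eventually_le_const one_pos] with n hn
    simpa using Real.sqrt_le_left (by norm_num) |>.mp hn
  have o2 : ∀ n, h1Inner d Λ (R n) (Wcyl d q Λ) = 0 := fun n => by
    rw [Wcyl_eq hd]; exact ho3 n ⟨d - 1, by lia⟩
  have htr := fun n => deficit_transport hd hq hΛ hFS (hu n).1 (hlam n)
    ⟨(hR n).1, (hR n).2.1⟩ (hdec n) (ho1 n) (o2 n)
  rcases lt_or_ge 0 (Cstar d Λ q) with hC | hC
  · obtain ⟨C, δ, hC0, hδ, h⟩ := expansion_pos hd hq hΛ hFS hC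
    refine ⟨C, C, hC0, ?_⟩
    filter_upwards [hρ, hμ1.eventually_le_const hδ] with n h1 h2
    rw [htr n]
    exact h (μ n) (R n) h2 (hR n) h1 (ho1 n) (o2 n)
  · obtain ⟨δ, hδ, h⟩ := expansion_nonpos hd hq hΛ hC
    refine ⟨0, 0, le_rfl, ?_⟩
    filter_upwards [hρ, hμ1.eventually_le_const hδ] with n h1 h2
    rw [htr n, zero_mul, sub_zero]
    exact h (μ n) (R n) h2 (hR n) h1
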